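/- Let α ∈ [0,1] be irrational and let 0 < δ ≤ ∞. Then the exact resonance level set D(δ) satisfies the zero–infinity dichotomy: ℋ^{ω_s}(D(δ)) = 0 for every s > 1, and ℋ^{ω_s}(D(δ)) = ∞ for every 0 < s ≤ 1. -/

import Mathlib

open Filter MeasureTheory Set
open scoped ENNReal NNReal Classical

/-- Distance from `x : ℝ` to the nearest integer, i.e. `‖x‖_{ℝ/ℤ}`. -/
noncomputable def distZ (x : ℝ) : ℝ := |x - round x|

/-- The `ω`-Hausdorff measure of a set `S ⊆ ℝ`: the limit as `ε → 0⁺` (equivalently the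
supremum over `ε > 0`, by monotonicity) of the infimum of `∑ᵢ ω (bᵢ - aᵢ)` over countable
covers of `S` by intervals `(aᵢ, bᵢ)` of length at most `ε`. -/
noncomputable def gaugeHaus (ω : ℝ → ℝ) (S : Set ℝ) : ℝ≥0∞ :=
  ⨆ (ε : ℝ) (_ : 0 < ε),
    ⨅ (a : ℕ → ℝ) (b : ℕ → ℝ) (_ : S ⊆ ⋃ i, Set.Ioo (a i) (b i))
      (_ : ∀ i, a i ≤ b i ∧ b i - a i ≤ ε),
      ∑' i, ENNReal.ofReal (ω (b i - a i))

/-- The gauge function `ω_s(r) = (-log r)^{-s}` for `0 < r < 1`, and `ω_s(0) = 0`. -/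
noncomputable def omegaS (s : ℝ) (r : ℝ) : ℝ := if 0 < r then (-Real.log r) ^ (-s) else 0

/-- The resonance strength `δ(α, x) = limsup_{|k| → ∞} (-log ‖x - kα‖_{ℝ/ℤ}) / |k|`,
with the convention that it is `∞` when `x ≡ kα (mod ℤ)` for some `k ∈ ℤ`. -/

noncomputable def resStrength (α x : ℝ) : ℝ≥0∞ :=
  if ∃ k m : ℤ, x = (k : ℝ) * α + (m : ℝ) then ⊤
  else Filter.limsup
    (fun k : ℤ => ENNReal.ofReal (-Real.log (distZ (x - (k : ℝ) * α)) / |(k : ℝ)|))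
    Filter.cofinite

/-- The exact resonance level set `D(δ) = {x ∈ [0,1] : δ(α,x) = δ}`. -/
noncomputable def resSet (α : ℝ) (δ : ℝ≥0∞) : Set ℝ :=
  {x ∈ Set.Icc (0 : ℝ) 1 | resStrength α x = δ}

/-!
The convergent half is a Borel–Cantelli argument: a point of resonance strength above `c` lies on
the orbit or, for infinitely many `k`, within `exp (-c * |k|) / 2` of `k * α`, and
`ω_s (exp (-c * |k|)) = (c * |k|) ^ (-s)` is summable for `s > 1`.

For the divergent half it suffices to treat `s = 1` and to produce, for every fine cover of bounded
`ω₁`-mass, a point of `D(δ)` missed by it. At a time scale `n` at which the orbit is separated, a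
positive proportion of the indices `l ∈ [n, 2 * n)` have `l * α` isolated from the strong resonances
of the other indices, and each comes with a resonant interval of length `exp (-d * l) / 2`, whose
`ω₁`-mass is about `1 / (d * l)`. The resonant intervals at one scale thus have total mass bounded
below *independently of the scale* (the divergence of `∑ 1 / l`). An interval `U` of the cover meets
one of them, and those it meets besides have mass `O(|U| / d)` at each scale, which is negligible
against `ω₁ |U|`. With enough scales at once, the total exceeds the mass of the cover by any factor,
so some resonant interval receives less than a quarter of its own `ω₁`-mass from the cover. This
property reproduces itself inside that interval. The nested intervals, with rates `d` increasing to
`δ`, shrink to a point of `D(δ)` outside the cover.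
-/

open scoped Topology

/-! ### The distance to the nearest integer -/

lemma distZ_eq_norm (x : ℝ) : distZ x = ‖(x : UnitAddCircle)‖ := UnitAddCircle.norm_eq.symm

lemma distZ_nonneg (x : ℝ) : 0 ≤ distZ x := abs_nonneg _

lemma distZ_le_abs_sub_intCast (x : ℝ) (m : ℤ) : distZ x ≤ |x - m| := round_le x m

lemma distZ_eq_abs {x : ℝ} (hx : |x| ≤ 1 / 2) : distZ x = |x| := by
  rw [distZ_eq_norm, AddCircle.norm_coe_eq_abs_iff 1 one_ne_zero]
  simpa using hx

lemma distZ_neg (x : ℝ) : distZ (-x) = distZ x := by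
  rw [distZ_eq_norm, distZ_eq_norm, AddCircle.coe_neg, norm_neg]

lemma distZ_fract (x : ℝ) : distZ (Int.fract x) = distZ x := by
  rw [distZ, distZ, Int.fract, round_sub_intCast, Int.cast_sub, sub_sub_sub_cancel_right]

lemma distZ_add_intCast (x : ℝ) (m : ℤ) : distZ (x + m) = distZ x := by
  rw [← distZ_fract, Int.fract_add_intCast, distZ_fract]

lemma distZ_fract_sub (x y : ℝ) : distZ (Int.fract x - y) = distZ (x - y) := by
  rw [← distZ_add_intCast _ ⌊x⌋, sub_add_eq_add_sub, Int.fract_add_floor]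

lemma distZ_le_add_abs_sub (x y : ℝ) : distZ x ≤ distZ y + |x - y| := by
  calc distZ x ≤ |x - round y| := distZ_le_abs_sub_intCast x _
    _ = |(y - round y) + (x - y)| := by ring_nf
    _ ≤ distZ y + |x - y| := abs_add_le _ _

lemma distZ_sub_le_abs_fract_sub (x y : ℝ) :
    distZ (x - y) ≤ |Int.fract x - Int.fract y| := by
  rw [← distZ_fract_sub, ← distZ_neg, neg_sub, ← distZ_fract_sub, abs_sub_comm]
  simpa using distZ_le_abs_sub_intCast (Int.fract y - Int.fract x) 0

lemma distZ_eq_zero_iff {x : ℝ} : distZ x = 0 ↔ ∃ m : ℤ, x = m := by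
  rw [distZ_eq_norm, norm_eq_zero, AddCircle.coe_eq_zero_iff]
  simp [eq_comm]

/-! ### Diophantine approximation -/

lemma exists_rat_abs_sub_lt_and_le_den {α : ℝ} (hα : Irrational α) (N : ℕ) :
    ∃ r : ℚ, N ≤ r.den ∧ |α - r| < 1 / (r.den : ℝ) ^ 2 := by
  obtain ⟨ε, hεN, hε⟩ := ((hα.eventually_forall_le_dist_cast_rat_of_den_le N).filter_mono
    nhdsWithin_le_nhds |>.and self_mem_nhdsWithin : ∀ᶠ ε : ℝ in 𝓝[>] 0, _ ∧ ε ∈ Ioi 0).exists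
  obtain ⟨n, hn⟩ := exists_nat_one_div_lt (mem_Ioi.1 hε)
  obtain ⟨r, hr, hden⟩ := Real.exists_rat_abs_sub_le_and_den_le α n.succ_pos
  have hr0 : (1 : ℝ) ≤ r.den := by exact_mod_cast r.den_pos
  have hden' : (r.den : ℝ) ≤ (n.succ : ℝ) := by exact_mod_cast hden
  refine ⟨r, ?_, hr.trans_lt ?_⟩
  · by_contra! hlt
    refine (hεN r hlt.le).not_gt ((hr.trans ?_).trans_lt hn)
    push_cast
    gcongr
    nlinarith
  · rw [sq]
    gcongr
    linarith

lemma one_div_le_distZ_mul_of_abs_sub_lt {α : ℝ} {r : ℚ} (hr : |α - r| < 1 / (r.den : ℝ) ^ 2)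
    {k : ℤ} (hk : k ≠ 0) (hkr : 2 * k.natAbs ≤ r.den) : 1 / (2 * r.den) ≤ distZ (k * α) := by
  have hden : (0 : ℝ) < r.den := by exact_mod_cast r.den_pos
  have hnum : (r : ℝ) * r.den = r.num := by exact_mod_cast Rat.mul_den_eq_num r
  have hk2 : 2 * |(k : ℝ)| ≤ r.den := by
    rw [← Int.cast_abs, ← Nat.cast_natAbs]; exact_mod_cast hkr
  have hne : k * r.num - round (k * α) * r.den ≠ 0 := fun h ↦ by
    have hdvd : (r.den : ℤ) ∣ k := by
      refine (Int.isCoprime_iff_gcd_eq_one.2 ?_ : IsCoprime (r.den : ℤ) r.num).dvd_of_dvd_mul_right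
        ⟨round (k * α), by linarith⟩
      simpa [Int.gcd] using r.reduced.symm
    have := Nat.le_of_dvd (Int.natAbs_pos.2 hk) (Int.natCast_dvd.1 hdvd)
    have := Int.natAbs_pos.2 hk
    omega
  have hint : (1 : ℝ) ≤ |(k : ℝ) * r - round (k * α)| * r.den := by
    have : (1 : ℝ) ≤ |((k * r.num - round (k * α) * r.den : ℤ) : ℝ)| := by
      exact_mod_cast Int.one_le_abs hne
    rwa [Int.cast_sub, Int.cast_mul, Int.cast_mul, ← hnum, Int.cast_natCast, ← mul_assoc,
      ← sub_mul, abs_mul, abs_of_pos hden] at this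
  have herr : |(k : ℝ) * r - k * α| * r.den ≤ 1 / 2 := by
    rw [← mul_sub, abs_mul, abs_sub_comm]
    calc |(k : ℝ)| * |α - r| * r.den ≤ r.den / 2 * (1 / (r.den : ℝ) ^ 2) * r.den := by
          gcongr; linarith
      _ = 1 / 2 := by field_simp
  have htri : |(k : ℝ) * r - round (k * α)| ≤ |(k : ℝ) * r - k * α| + distZ (k * α) :=
    abs_sub_le _ _ _
  rw [div_le_iff₀ (by positivity)]
  nlinarith [mul_le_mul_of_nonneg_right htri hden.le]

/-- `n` is a separated scale for the rotation by `α` if the multiples of `α` with nonzero index of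
size at most `8 * n` are at distance at least `1 / (64 * n)` from the integers. -/
def IsSeparatedScale (α : ℝ) (n : ℕ) : Prop :=
  ∀ k : ℤ, k ≠ 0 → k.natAbs ≤ 8 * n → 1 / (64 * n) ≤ distZ (k * α)

lemma frequently_isSeparatedScale {α : ℝ} (hα : Irrational α) :
    ∃ᶠ n in atTop, IsSeparatedScale α n := by
  refine frequently_atTop.2 fun N ↦ ?_
  obtain ⟨r, hN, hr⟩ := exists_rat_abs_sub_lt_and_le_den hα (16 * (N + 1))
  refine ⟨r.den / 16, by omega, fun k hk hkr ↦ ?_⟩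
  refine le_trans ?_ (one_div_le_distZ_mul_of_abs_sub_lt hr hk (by omega))
  have h0 := r.den_pos
  have h32 : (r.den : ℝ) ≤ 32 * (r.den / 16 : ℕ) := by exact_mod_cast (by omega)
  have : (0 : ℝ) < r.den := by exact_mod_cast h0
  gcongr 1 / ?_
  linarith

lemma card_le_of_forall_le_abs_sub {ι : Type*} {s : Finset ι} {f : ι → ℝ} {x L η : ℝ}
    (hη : 0 < η) (hL : 0 ≤ L) (hf : ∀ i ∈ s, f i ∈ Icc x (x + L))
    (hs : ∀ i ∈ s, ∀ j ∈ s, i ≠ j → η ≤ |f i - f j|) : (s.card : ℝ) ≤ L / η + 1 := by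
  have hmaps : ∀ i ∈ s, ⌊(f i - x) / η⌋₊ ∈ Finset.range (⌊L / η⌋₊ + 1) := fun i hi ↦ by
    rw [Finset.mem_range, Nat.lt_succ_iff]
    gcongr
    linarith [(hf i hi).2]
  have hinj : Set.InjOn (fun i ↦ ⌊(f i - x) / η⌋₊) s := fun i hi j hj hij ↦ by
    by_contra hne
    have hnonneg : ∀ l ∈ s, 0 ≤ (f l - x) / η := fun l hl ↦
      div_nonneg (sub_nonneg.2 (hf l hl).1) hη.le
    have hlt := Int.abs_sub_lt_one_of_floor_eq_floor (a := (f i - x) / η)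
      (b := (f j - x) / η) (by
        rw [← Int.natCast_floor_eq_floor (hnonneg i hi),
          ← Int.natCast_floor_eq_floor (hnonneg j hj)]
        exact_mod_cast hij)
    rw [← sub_div, sub_sub_sub_cancel_right, abs_div, abs_of_pos hη, div_lt_one hη] at hlt
    exact (hs i hi j hj hne).not_gt hlt
  have hcard := Finset.card_le_card_of_injOn _ hmaps hinj
  rw [Finset.card_range] at hcard
  calc (s.card : ℝ) ≤ (⌊L / η⌋₊ + 1 : ℕ) := by exact_mod_cast hcard
    _ ≤ L / η + 1 := by push_cast; gcongr; exact Nat.floor_le (by positivity)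

/-! ### Visits of the orbit to an interval -/

lemma exists_natCast_mul_add_intCast_mem_Ioo {α x y : ℝ} (hα : Irrational α) (hxy : x < y) :
    ∃ (m : ℕ) (j : ℤ), m * α + j ∈ Ioo x y := by
  have hdense : DenseRange (· • (α : UnitAddCircle) : ℕ → UnitAddCircle) := by
    rw [← denseRange_zsmul_iff_nsmul, AddCircle.denseRange_zsmul_coe_iff, div_one]
    exact hα
  obtain ⟨m, t, ht, htm⟩ := hdense.exists_mem_open
    (QuotientAddGroup.isOpenMap_coe _ (isOpen_Ioo (a := x) (b := y))) ((nonempty_Ioo.2 hxy).image _)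
  replace htm : ((t - m * α : ℝ) : UnitAddCircle) = 0 := by
    rw [AddCircle.coe_sub, sub_eq_zero, ← nsmul_eq_mul]
    exact htm
  obtain ⟨j, hj⟩ := AddCircle.coe_eq_zero_iff (1 : ℝ) |>.1 htm
  refine ⟨m, j, ?_⟩
  rw [zsmul_one] at hj
  rwa [hj, add_sub_cancel]

lemma fract_natCast_add_mul_mem_Ico {α u v x y : ℝ} (hu : 0 ≤ u) (hv : v ≤ 1) {l m : ℕ} {j : ℤ}
    (hm : m * α + j ∈ Icc (u - x) (v - y)) (hl : Int.fract (l * α) ∈ Ico x y) :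
    Int.fract ((l + m : ℕ) * α) ∈ Ico u v := by
  have hmem : Int.fract (l * α) + (m * α + j) ∈ Ico u v :=
    ⟨by linarith [hm.1, hl.1], by linarith [hm.2, hl.2]⟩
  have heq : ((l + m : ℕ) : ℝ) * α =
      Int.fract (l * α) + (m * α + j) + ((⌊l * α⌋ - j : ℤ) : ℝ) := by
    have := Int.fract_add_floor (l * α)
    push_cast
    linarith
  rwa [heq, Int.fract_add_intCast,
    Int.fract_eq_self.2 ⟨hu.trans hmem.1, hmem.2.trans_le hv⟩]

lemma exists_forall_mul_card_le_card_filter_fract_mem_Ico {α u v : ℝ} (hα : Irrational α)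
    (hu : 0 ≤ u) (hv : v ≤ 1) {N : ℕ} (hN : 1 / N < v - u) :
    ∃ T : ℕ, ∀ n : ℕ, ((n - T : ℕ) : ℝ) / N ≤
      (((Finset.Ico n (2 * n)).filter fun l : ℕ ↦ Int.fract (l * α) ∈ Ico u v).card : ℝ) := by
  rcases N.eq_zero_or_pos with rfl | hN0
  · exact ⟨0, fun n ↦ by simp⟩
  have hN0' : (0 : ℝ) < N := by exact_mod_cast hN0
  choose m j hmj using fun c : ℕ ↦ exists_natCast_mul_add_intCast_mem_Ioo hα
    (show u - (c : ℝ) / N < v - (c + 1) / N by rw [add_div]; linarith)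
  refine ⟨(Finset.range N).sup m, fun n ↦ ?_⟩
  set T := (Finset.range N).sup m
  obtain ⟨c, hc, hcard⟩ := Finset.exists_le_card_fiber_of_nsmul_le_card_of_maps_to
    (s := Finset.Ico n (2 * n - T)) (t := Finset.range N) (b := ((n - T : ℕ) : ℝ) / N)
    (f := fun l ↦ ⌊Int.fract (l * α) * N⌋₊) (fun l _ ↦ by
      rw [Finset.mem_range, Nat.floor_lt (mul_nonneg (Int.fract_nonneg _) hN0'.le)]
      exact mul_lt_of_lt_one_left hN0' (Int.fract_lt_one _)) ⟨0, Finset.mem_range.2 hN0⟩ (by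
      rw [Finset.card_range, nsmul_eq_mul, mul_div_cancel₀ _ hN0'.ne', Nat.card_Ico]
      exact_mod_cast (by omega))
  refine hcard.trans (Nat.cast_le.2 (Finset.card_le_card_of_injOn (· + m c) (fun l hl ↦ ?_)
    (add_left_injective _).injOn))
  have hmT : m c ≤ T := Finset.le_sup hc
  simp only [Finset.coe_filter, Finset.mem_Ico, mem_ofPred_eq] at hl ⊢
  rw [Nat.floor_eq_iff (mul_nonneg (Int.fract_nonneg _) hN0'.le), ← div_le_iff₀ hN0',
    ← lt_div_iff₀ hN0'] at hl
  exact ⟨by omega, fract_natCast_add_mul_mem_Ico hu hv (Ioo_subset_Icc_self (hmj c)) hl.2⟩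

lemma eventually_le_card_filter_fract_mem_Ico {α u v : ℝ} (hα : Irrational α) (hu : 0 ≤ u)
    (huv : u < v) (hv : v ≤ 1) :
    ∀ᶠ n : ℕ in atTop, n * (v - u) / 4 ≤
      (((Finset.Ico n (2 * n)).filter fun l : ℕ ↦ Int.fract (l * α) ∈ Ico u v).card : ℝ) := by
  have hw : 0 < v - u := sub_pos.2 huv
  set N := ⌊1 / (v - u)⌋₊ + 1 with hN
  have hN1 : 1 / (v - u) < N := by exact_mod_cast Nat.lt_floor_add_one _
  have hN0 : (0 : ℝ) < N := by positivity
  have hN2 : N * (v - u) ≤ 2 := by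
    have hfloor := Nat.floor_le (one_div_pos.2 hw).le
    have hcancel : 1 / (v - u) * (v - u) = 1 := one_div_mul_cancel hw.ne'
    rw [hN]
    push_cast
    nlinarith
  obtain ⟨T, hT⟩ := exists_forall_mul_card_le_card_filter_fract_mem_Ico hα hu hv
    ((one_div_lt hw hN0).1 hN1)
  filter_upwards [eventually_ge_atTop (2 * T)] with n hn
  refine le_trans ?_ (hT n)
  have h2 : (n : ℝ) ≤ 2 * (n - T : ℕ) := by exact_mod_cast (by omega)
  rw [le_div_iff₀ hN0]
  nlinarith

/-! ### Isolated points of the orbit -/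

lemma IsSeparatedScale.le_distZ_sub {α : ℝ} {n : ℕ} (h : IsSeparatedScale α n) {j k : ℤ}
    (hjk : j ≠ k) (hle : (j - k).natAbs ≤ 8 * n) : 1 / (64 * n) ≤ distZ (j * α - k * α) := by
  rw [← sub_mul, ← Int.cast_sub]
  exact h (j - k) (sub_ne_zero.2 hjk) hle

lemma IsSeparatedScale.card_filter_distZ_lt_le {α : ℝ} {n : ℕ} (h : IsSeparatedScale α n) {k : ℤ}
    (hk : k.natAbs ≤ 4 * n) {ρ : ℝ} (hρ : 0 < ρ) :
    (((Finset.Ico n (2 * n)).filter fun l : ℕ ↦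
      k ≠ l ∧ distZ (l * α - k * α) < 2 * ρ).card : ℝ) ≤ 384 * n * ρ := by
  set F := (Finset.Ico n (2 * n)).filter fun l : ℕ ↦ k ≠ l ∧ distZ (l * α - k * α) < 2 * ρ
  rcases F.eq_empty_or_nonempty with hF | ⟨l, hl⟩
  · rw [hF, Finset.card_empty, Nat.cast_zero]
    positivity
  have hmem {l} (hl : l ∈ F) : l ∈ Ico n (2 * n) ∧ k ≠ l ∧ distZ (l * α - k * α) < 2 * ρ := by
    simpa [F] using hl
  have hn : (0 : ℝ) < n := by have := (hmem hl).1; exact_mod_cast (by grind : 0 < n)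
  have hlarge : 1 < 128 * n * ρ := by
    have := h.le_distZ_sub (hmem hl).2.1.symm (by grind)
    rw [Int.cast_natCast, div_le_iff₀ (by positivity)] at this
    nlinarith [(hmem hl).2.2]
  have hcard : (F.card : ℝ) ≤ 4 * ρ / (1 / (64 * n)) + 1 := by
    refine card_le_of_forall_le_abs_sub (x := -(2 * ρ))
      (f := fun l : ℕ ↦ (l * α - k * α) - round (l * α - k * α)) (by positivity) (by positivity)
      (fun l hl ↦ ?_) fun l hl m hm hlm ↦ ?_
    · have := abs_lt.1 (hmem hl).2.2
      exact ⟨this.1.le, by linarith⟩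
    · have hsep := h.le_distZ_sub (j := l) (k := m) (by exact_mod_cast hlm) (by grind)
      refine hsep.trans ((distZ_le_abs_sub_intCast _
        (round (l * α - k * α) - round (m * α - k * α))).trans_eq ?_)
      push_cast
      ring_nf
  calc (F.card : ℝ) ≤ 256 * n * ρ + 1 := by convert hcard using 2; field_simp; norm_num
    _ ≤ 384 * n * ρ := by linarith

lemma sum_exp_neg_mul_Ico_le {d : ℝ} (hd : 0 < d) (K m : ℕ) :
    ∑ j ∈ Finset.Ico (K + 1) m, Real.exp (-(d * j)) ≤
      Real.exp (-(d * K)) / (1 - Real.exp (-d)) := by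
  have hpow (j : ℕ) : Real.exp (-(d * j)) = Real.exp (-d) ^ j := by
    rw [← Real.exp_nat_mul]; ring_nf
  have hlt : Real.exp (-d) < 1 := Real.exp_lt_one_iff.2 (neg_lt_zero.2 hd)
  have : 0 < 1 - Real.exp (-d) := sub_pos.2 hlt
  simp only [hpow]
  calc _ ≤ Real.exp (-d) ^ (K + 1) / (1 - Real.exp (-d)) :=
        geom_sum_Ico_le_of_lt_one (Real.exp_pos _).le hlt
    _ ≤ _ := by gcongr ?_ / _; exact pow_le_pow_of_le_one (Real.exp_pos _).le hlt.le K.le_succ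

/-- The indices `l ∈ [n, 2 * n)` for which `l * α` falls in `[u, v)` modulo one and stays at
distance at least `2 * exp (-d * |k|)` from every other multiple `k * α` with `K < |k| ≤ 4 * n`.
The distance is twice the radius that matters for resonance, so that the points within
`exp (-d * l)` of `l * α` keep half of it. -/
noncomputable def isolatedIndices (α d u v : ℝ) (K n : ℕ) : Finset ℕ :=
  (Finset.Ico n (2 * n)).filter fun l : ℕ ↦ Int.fract (l * α) ∈ Ico u v ∧
    ∀ k : ℤ, K < k.natAbs → k.natAbs ≤ 4 * n → k ≠ l →
      2 * Real.exp (-(d * k.natAbs)) ≤ distZ (l * α - k * α)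

lemma mem_isolatedIndices {α d u v : ℝ} {K n l : ℕ} :
    l ∈ isolatedIndices α d u v K n ↔ l ∈ Ico n (2 * n) ∧ Int.fract (l * α) ∈ Ico u v ∧
      ∀ k : ℤ, K < k.natAbs → k.natAbs ≤ 4 * n → k ≠ l →
        2 * Real.exp (-(d * k.natAbs)) ≤ distZ (l * α - k * α) := by
  simp [isolatedIndices]

lemma card_filter_fract_mem_Ico_le_card_isolatedIndices_add {α d u v : ℝ} (hd : 0 < d) (K : ℕ)
    {n : ℕ} (h : IsSeparatedScale α n) :
    (((Finset.Ico n (2 * n)).filter fun l : ℕ ↦ Int.fract (l * α) ∈ Ico u v).card : ℝ) ≤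
      (isolatedIndices α d u v K n).card +
        768 * n * (Real.exp (-(d * K)) / (1 - Real.exp (-d))) := by
  let close (k : ℤ) : Finset ℕ := (Finset.Ico n (2 * n)).filter fun l : ℕ ↦
    k ≠ l ∧ distZ (l * α - k * α) < 2 * Real.exp (-(d * k.natAbs))
  let bad := (Finset.Ico (K + 1) (4 * n + 1)).biUnion fun j ↦ close j ∪ close (-j)
  have hbad : (bad.card : ℝ) ≤ 768 * n * (Real.exp (-(d * K)) / (1 - Real.exp (-d))) := by
    calc (bad.card : ℝ)
      _ ≤ ∑ j ∈ Finset.Ico (K + 1) (4 * n + 1), (((close j).card + (close (-j)).card : ℕ) : ℝ) := by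
        exact_mod_cast Finset.card_biUnion_le.trans
          (Finset.sum_le_sum fun j _ ↦ Finset.card_union_le _ _)
      _ ≤ ∑ j ∈ Finset.Ico (K + 1) (4 * n + 1), 768 * n * Real.exp (-(d * j)) := by
        refine Finset.sum_le_sum fun j hj ↦ ?_
        have hj4 : j ≤ 4 * n := Nat.lt_succ_iff.1 (Finset.mem_Ico.1 hj).2
        have hpos := h.card_filter_distZ_lt_le (k := j) (by simpa) (Real.exp_pos (-(d * j)))
        have hneg := h.card_filter_distZ_lt_le (k := -j) (by simpa) (Real.exp_pos (-(d * j)))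
        simp only [close, Int.natAbs_neg, Int.natAbs_natCast]
        push_cast at hpos hneg ⊢
        linarith
      _ ≤ _ := by
        rw [← Finset.mul_sum]
        gcongr
        exact sum_exp_neg_mul_Ico_le hd K _
  have hsub : ((Finset.Ico n (2 * n)).filter fun l : ℕ ↦ Int.fract (l * α) ∈ Ico u v) ⊆
      isolatedIndices α d u v K n ∪ bad := fun l hl ↦ by
    rw [Finset.mem_filter] at hl
    by_contra! hnot
    simp only [Finset.mem_union, not_or, mem_isolatedIndices, not_and, not_forall, not_le] at hnot
    obtain ⟨k, hK, h4n, hne, hlt⟩ := hnot.1 (by simpa using hl.1) hl.2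
    have hk : l ∈ close k := Finset.mem_filter.2 ⟨hl.1, hne, hlt⟩
    refine hnot.2 (Finset.mem_biUnion.2 ⟨k.natAbs, by grind, Finset.mem_union.2 ?_⟩)
    exact (Int.natAbs_eq k).imp (fun h ↦ by rwa [← h]) (fun h ↦ by rwa [← h])
  calc _ ≤ (((isolatedIndices α d u v K n).card + bad.card : ℕ) : ℝ) :=
        Nat.cast_le.2 ((Finset.card_le_card hsub).trans (Finset.card_union_le _ _))
    _ ≤ _ := by push_cast; gcongr

/-- `n` is a good scale for the window `[u, v]`, the rate `d` and the index `K` if the orbit is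
separated up to time `8 * n`, if `exp (-d * n)` is tiny, and if a positive proportion of the indices
in `[n, 2 * n)` is isolated and visits the left half of the window. -/
structure IsGoodScale (α d u v : ℝ) (K n : ℕ) : Prop where
  pos : 0 < n
  lt : K < n
  separated : IsSeparatedScale α n
  exp_le_one_div : Real.exp (-(d * n)) ≤ 1 / (512 * n)
  exp_le_half_sub : Real.exp (-(d * n)) ≤ (v - u) / 2
  exp_le_one_sub_exp : Real.exp (-(d * n)) ≤ (1 - Real.exp (-d)) / 49152
  le_card : n * (v - u) / 16 ≤ (isolatedIndices α d u ((u + v) / 2) K n).card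

lemma frequently_isGoodScale {α d u v : ℝ} {K : ℕ} (hα : Irrational α) (hd : 0 < d) (hu : 0 ≤ u)
    (huv : u < v) (hv : v ≤ 1) (hK : Real.exp (-(d * K)) / (1 - Real.exp (-d)) ≤ (v - u) / 12288) :
    ∃ᶠ n in atTop, IsGoodScale α d u v K n := by
  have hw : 0 < v - u := sub_pos.2 huv
  have hd' : 0 < 1 - Real.exp (-d) := sub_pos.2 (Real.exp_lt_one_iff.2 (neg_lt_zero.2 hd))
  have hdn : Tendsto (fun n : ℕ ↦ d * n) atTop atTop :=
    tendsto_natCast_atTop_atTop.const_mul_atTop hd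
  have hexp := Real.tendsto_exp_neg_atTop_nhds_zero.comp hdn
  have hmul := (Real.tendsto_pow_mul_exp_neg_atTop_nhds_zero 1).comp hdn
  refine (frequently_isSeparatedScale hα).mp ?_
  filter_upwards [eventually_gt_atTop K,
    hmul.eventually_le_const (show 0 < d / 512 by positivity),
    hexp.eventually_le_const (show 0 < (v - u) / 2 by positivity),
    hexp.eventually_le_const (show 0 < (1 - Real.exp (-d)) / 49152 by positivity),
    eventually_le_card_filter_fract_mem_Ico hα hu (show u < (u + v) / 2 by linarith)
      (by linarith)] with n hKn hn hhalf hsmall hcard hsep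
  have hn0 : (0 : ℝ) < n := by exact_mod_cast (by omega : 0 < n)
  refine ⟨by omega, hKn, hsep, ?_, hhalf, hsmall, ?_⟩
  · rw [le_div_iff₀ (by positivity)]
    simp only [Function.comp_apply, pow_one] at hn
    refine le_of_mul_le_mul_left ?_ hd
    linarith
  · -- The window `[u, (u + v) / 2)` is visited at least `n * (v - u) / 8` times; half the visits
    -- are kept.
    have hbad : 768 * n * (Real.exp (-(d * K)) / (1 - Real.exp (-d))) ≤
        768 * n * ((v - u) / 12288) := by gcongr
    have := card_filter_fract_mem_Ico_le_card_isolatedIndices_add (u := u) (v := (u + v) / 2)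
      hd K hsep
    linarith

/-! ### The mass of a cover -/

section CoverMass

variable {X ι κ : Type*} {U : ι → Set X} {g : ι → ℝ≥0∞} {S : Set X}

/-- The part of the total weight `∑' j, g j` of a family of sets `U` carried by the sets that
meet `S`. -/
noncomputable def coverMass (U : ι → Set X) (g : ι → ℝ≥0∞) (S : Set X) : ℝ≥0∞ :=
  ∑' j, if (U j ∩ S).Nonempty then g j else 0

lemma le_coverMass {j : ι} (hj : (U j ∩ S).Nonempty) : g j ≤ coverMass U g S :=
  (if_pos hj).ge.trans (ENNReal.le_tsum (f := fun _ ↦ ite _ _ _) j)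

lemma coverMass_le_tsum : coverMass U g S ≤ ∑' j, g j :=
  ENNReal.tsum_le_tsum fun j ↦ by split_ifs <;> simp

lemma le_tsum_min_of_le_tsum {w : ℝ≥0∞} (h : w ≤ ∑' j, g j) : w ≤ ∑' j, min (g j) w := by
  by_cases hw : ∃ j, w ≤ g j
  · obtain ⟨j, hj⟩ := hw
    exact (min_eq_right hj).ge.trans (ENNReal.le_tsum j)
  · simp only [not_exists, not_le] at hw
    simpa only [min_eq_left (hw _).le] using h

-- Otherwise each `J p` would receive the mass `w p` from the cover, hence also from the truncated
-- weights `min (g j) (w p)`; summed over `p` these are at most `C * g j` for each `j`.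
lemma exists_coverMass_lt {P : Finset κ} {J : κ → Set X} {w : κ → ℝ≥0∞} {C : ℝ≥0∞}
    (hJ : ∀ p ∈ P, J p ⊆ S)
    (hpack : ∀ j, (U j ∩ S).Nonempty →
      ∑ p ∈ P with (U j ∩ J p).Nonempty, min (g j) (w p) ≤ C * g j)
    (hlt : C * coverMass U g S < ∑ p ∈ P, w p) : ∃ p ∈ P, coverMass U g (J p) < w p := by
  by_contra! hle
  refine hlt.not_ge ?_
  calc ∑ p ∈ P, w p
    _ ≤ ∑ p ∈ P, ∑' j, if (U j ∩ J p).Nonempty then min (g j) (w p) else 0 :=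
      Finset.sum_le_sum fun p hp ↦ (le_tsum_min_of_le_tsum (hle p hp)).trans_eq
        (tsum_congr fun j ↦ by split_ifs <;> simp)
    _ = ∑' j, ∑ p ∈ P with (U j ∩ J p).Nonempty, min (g j) (w p) := by
      simp only [Finset.sum_filter, Summable.tsum_finsetSum fun _ _ ↦ ENNReal.summable]
    _ ≤ ∑' j, C * if (U j ∩ S).Nonempty then g j else 0 := by
      refine ENNReal.tsum_le_tsum fun j ↦ ?_
      split_ifs with hj
      · exact hpack j hj
      · refine (Finset.sum_eq_zero fun p hp ↦ ?_).trans_le zero_le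
        rw [Finset.mem_filter] at hp
        exact absurd (hp.2.mono (inter_subset_inter_right _ (hJ p hp.1))) hj
    _ = C * coverMass U g S := ENNReal.tsum_mul_left

end CoverMass

/-! ### Resonant intervals -/

/-- A one-sided annulus around `l * α` modulo one: the points at distance between `exp (-d * l) / 2`
and `exp (-d * l)` to its right. -/
noncomputable def resonantInterval (α d : ℝ) (l : ℕ) : Set ℝ :=
  Icc (Int.fract (l * α) + Real.exp (-(d * l)) / 2) (Int.fract (l * α) + Real.exp (-(d * l)))

lemma distZ_sub_mul_mem_Icc_of_mem_resonantInterval {α d x : ℝ} {l : ℕ}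
    (hl : Real.exp (-(d * l)) ≤ 1 / 2) (hx : x ∈ resonantInterval α d l) :
    distZ (x - l * α) ∈ Icc (Real.exp (-(d * l)) / 2) (Real.exp (-(d * l))) := by
  have hpos := Real.exp_pos (-(d * l))
  have habs : |Int.fract (l * α) - x| = x - Int.fract (l * α) := by
    rw [abs_sub_comm, abs_of_nonneg (by linarith [hx.1])]
  rw [← distZ_neg, neg_sub, ← distZ_fract_sub, distZ_eq_abs (by linarith [hx.2]), habs]
  exact ⟨by linarith [hx.1], by linarith [hx.2]⟩

section IsolatedIndices

variable {α d u v a b : ℝ} {K n l : ℕ}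

lemma exp_neg_mul_le_of_mem_isolatedIndices (hd : 0 < d) (hl : l ∈ isolatedIndices α d u v K n) :
    Real.exp (-(d * l)) ≤ Real.exp (-(d * n)) := by
  have : (n : ℝ) ≤ l := by exact_mod_cast (mem_isolatedIndices.1 hl).1.1
  gcongr

lemma IsGoodScale.resonantInterval_subset (h : IsGoodScale α d u v K n) (hd : 0 < d)
    (hl : l ∈ isolatedIndices α d u ((u + v) / 2) K n) :
    resonantInterval α d l ⊆ Icc u v := by
  have hexp := exp_neg_mul_le_of_mem_isolatedIndices hd hl
  have hfract := (mem_isolatedIndices.1 hl).2.1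
  exact Icc_subset_Icc (by linarith [hfract.1, Real.exp_pos (-(d * l))])
    (by linarith [hfract.2, h.exp_le_half_sub])

lemma one_div_le_sub_of_meets_resonantInterval {n' l' : ℕ} {u' v' : ℝ} (h : IsSeparatedScale α n')
    (hn' : 0 < n') (hexp : Real.exp (-(d * l')) ≤ 1 / (512 * n')) (hnn' : n ≤ n') (hKn : K < n)
    (hl : l ∈ isolatedIndices α d u v K n) (hl' : l' ∈ isolatedIndices α d u' v' K n')
    (hne : l ≠ l') (hm : (Ioo a b ∩ resonantInterval α d l).Nonempty)
    (hm' : (Ioo a b ∩ resonantInterval α d l').Nonempty) : 1 / (256 * n') ≤ b - a := by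
  obtain ⟨x, hxab, hx⟩ := hm
  obtain ⟨y, hyab, hy⟩ := hm'
  rw [mem_isolatedIndices, mem_Ico] at hl hl'
  have hisol : 2 * Real.exp (-(d * l)) ≤ distZ (l' * α - l * α) :=
    hl'.2.2 l (by simp; omega) (by simp; omega) (by exact_mod_cast hne)
  have hsep : 1 / (64 * n') ≤ distZ (l' * α - l * α) :=
    h.le_distZ_sub (j := l') (k := l) (by exact_mod_cast hne.symm) (by omega)
  have hfract := distZ_sub_le_abs_fract_sub (l' * α) (l * α)
  have h64 : 1 / (64 * (n' : ℝ)) = 8 * (1 / (512 * n')) := by field_simp; norm_num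
  have h256 : 1 / (256 * (n' : ℝ)) = 2 * (1 / (512 * n')) := by field_simp; norm_num
  obtain ⟨hx₁, hx₂⟩ := hx
  obtain ⟨hy₁, hy₂⟩ := hy
  obtain ⟨hxa, hxb⟩ := hxab
  obtain ⟨hya, hyb⟩ := hyab
  have := Real.exp_pos (-(d * l))
  have := Real.exp_pos (-(d * l'))
  rcases abs_cases (Int.fract (l' * α) - Int.fract (l * α)) with ⟨habs, -⟩ | ⟨habs, -⟩ <;> linarith

lemma IsGoodScale.card_meets_resonantInterval_le (h : IsGoodScale α d u v K n) (hd : 0 < d)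
    (hab : 1 / (256 * n) ≤ b - a) {F : Finset ℕ} {u' v' : ℝ}
    (hF : F ⊆ isolatedIndices α d u' v' K n)
    (hm : ∀ l ∈ F, (Ioo a b ∩ resonantInterval α d l).Nonempty) :
    (F.card : ℝ) ≤ 384 * n * (b - a) := by
  have hn : (0 : ℝ) < n := by exact_mod_cast h.pos
  have h256 : 1 / (256 * (n : ℝ)) = 2 * (1 / (512 * n)) := by field_simp; norm_num
  have hcard : (F.card : ℝ) ≤ 2 * (b - a) / (1 / (64 * n)) + 1 := by
    refine card_le_of_forall_le_abs_sub (x := a - 1 / (512 * n))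
      (f := fun l : ℕ ↦ Int.fract (l * α)) (by positivity)
      (by linarith [show 0 < 1 / (256 * (n : ℝ)) by positivity])
      (fun l hl ↦ ?_) fun l hl m hm hlm ↦ ?_
    · obtain ⟨x, ⟨hxa, hxb⟩, hx₁, hx₂⟩ := hm l hl
      have hexp := exp_neg_mul_le_of_mem_isolatedIndices hd (hF hl)
      have hexp' := h.exp_le_one_div
      have := Real.exp_pos (-(d * l))
      constructor <;> linarith
    · have hl' := (mem_isolatedIndices.1 (hF hl)).1
      have hm' := (mem_isolatedIndices.1 (hF hm)).1
      exact (h.separated.le_distZ_sub (j := l) (k := m) (by exact_mod_cast hlm) (by grind)).trans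
        (distZ_sub_le_abs_fract_sub _ _)
  have hlarge : 1 ≤ 256 * n * (b - a) := by
    rw [div_le_iff₀ (by positivity)] at hab
    linarith
  calc (F.card : ℝ) ≤ 128 * n * (b - a) + 1 := by convert hcard using 2; field_simp; ring
    _ ≤ 384 * n * (b - a) := by linarith

lemma IsGoodScale.ofReal_le_sum_isolatedIndices (h : IsGoodScale α d u v K n) (hd : 0 < d)
    (huv : u < v) :
    ENNReal.ofReal ((v - u) / (256 * d)) ≤
      ∑ l ∈ isolatedIndices α d u ((u + v) / 2) K n, ENNReal.ofReal (1 / (8 * d * l)) := by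
  have hn : (0 : ℝ) < n := by exact_mod_cast h.pos
  have hw : 0 < v - u := sub_pos.2 huv
  calc ENNReal.ofReal ((v - u) / (256 * d))
    _ = ENNReal.ofReal (n * (v - u) / 16 * (1 / (8 * d * (2 * n)))) := by
      congr 1; field_simp; norm_num
    _ ≤ ENNReal.ofReal ((isolatedIndices α d u ((u + v) / 2) K n).card *
          (1 / (8 * d * (2 * n)))) := by
      gcongr
      exact h.le_card
    _ = ∑ l ∈ isolatedIndices α d u ((u + v) / 2) K n,
          ENNReal.ofReal (1 / (8 * d * (2 * n))) := by
      rw [Finset.sum_const, nsmul_eq_mul, ENNReal.ofReal_mul (by positivity),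
        ENNReal.ofReal_natCast]
    _ ≤ _ := by
      refine Finset.sum_le_sum fun l hl ↦ ?_
      obtain ⟨hnl, hln⟩ := (mem_isolatedIndices.1 hl).1
      have hl0 : (0 : ℝ) < l := by exact_mod_cast h.pos.trans_le hnl
      have hl2 : (l : ℝ) ≤ 2 * n := by exact_mod_cast hln.le
      gcongr

lemma IsGoodScale.sum_meets_resonantInterval_le (h : IsGoodScale α d u v K n) (hd : 0 < d)
    (hab : 1 / (256 * n) ≤ b - a) {F : Finset ℕ} {u' v' : ℝ}
    (hF : F ⊆ isolatedIndices α d u' v' K n)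
    (hm : ∀ l ∈ F, (Ioo a b ∩ resonantInterval α d l).Nonempty) :
    ∑ l ∈ F, ENNReal.ofReal (1 / (8 * d * l)) ≤ ENNReal.ofReal (48 * (b - a) / d) := by
  have hn : (0 : ℝ) < n := by exact_mod_cast h.pos
  calc ∑ l ∈ F, ENNReal.ofReal (1 / (8 * d * l))
    _ ≤ ∑ l ∈ F, ENNReal.ofReal (1 / (8 * d * n)) := by
      refine Finset.sum_le_sum fun l hl ↦ ?_
      have : (n : ℝ) ≤ l := by exact_mod_cast (mem_isolatedIndices.1 (hF hl)).1.1
      gcongr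
    _ = ENNReal.ofReal (F.card * (1 / (8 * d * n))) := by
      rw [Finset.sum_const, nsmul_eq_mul, ENNReal.ofReal_mul (by positivity),
        ENNReal.ofReal_natCast]
    _ ≤ ENNReal.ofReal (384 * n * (b - a) * (1 / (8 * d * n))) := by
      gcongr
      exact h.card_meets_resonantInterval_le hd hab hF hm
    _ = ENNReal.ofReal (48 * (b - a) / d) := by
      congr 1; field_simp; ring

end IsolatedIndices

lemma disjoint_isolatedIndices {α d u v : ℝ} {K n n' : ℕ} (h : 2 * n ≤ n') :
    Disjoint (isolatedIndices α d u v K n) (isolatedIndices α d u v K n') :=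
  Finset.disjoint_left.2 fun l hl hl' ↦ by
    have := (mem_isolatedIndices.1 hl).1
    have := (mem_isolatedIndices.1 hl').1
    grind

section ScaleSequence

variable {α d u v : ℝ} {K M : ℕ} {n : ℕ → ℕ}

lemma pairwiseDisjoint_isolatedIndices (hn : ∀ i j, i < j → 2 * n i ≤ n j) (s : Set ℕ) :
    s.PairwiseDisjoint fun i ↦ isolatedIndices α d u v K (n i) := fun i _ j _ hij ↦ by
  rcases hij.lt_or_gt with h | h
  · exact disjoint_isolatedIndices (hn i j h)
  · exact (disjoint_isolatedIndices (hn j i h)).symm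

lemma sum_gt_meets_resonantInterval_le (hd : 0 < d) (hn : ∀ i j, i < j → 2 * n i ≤ n j)
    (hgood : ∀ i, IsGoodScale α d u v K (n i)) {u' v' a b : ℝ} {l₀ i₀ : ℕ}
    (hl₀ : l₀ ∈ isolatedIndices α d u' v' K (n i₀))
    (hm₀ : (Ioo a b ∩ resonantInterval α d l₀).Nonempty) (i : ℕ) :
    ∑ l ∈ isolatedIndices α d u' v' K (n i)
      with l₀ < l ∧ (Ioo a b ∩ resonantInterval α d l).Nonempty,
      ENNReal.ofReal (1 / (8 * d * l)) ≤ ENNReal.ofReal (48 * (b - a) / d) := by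
  set F := (isolatedIndices α d u' v' K (n i)).filter fun l ↦
    l₀ < l ∧ (Ioo a b ∩ resonantInterval α d l).Nonempty
  have hmem {l} (hl : l ∈ F) := Finset.mem_filter.1 hl
  rcases F.eq_empty_or_nonempty with hF | ⟨l, hl⟩
  · simp [hF]
  have hl₀n := (mem_isolatedIndices.1 hl₀).1
  have hln := (mem_isolatedIndices.1 (hmem hl).1).1
  have hi₀i : n i₀ ≤ n i := by
    by_contra! hlt
    have := hn i i₀ (lt_of_not_ge fun hle ↦ by rcases hle.eq_or_lt with rfl | h <;> grind)
    have := (hmem hl).2.1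
    grind
  have hab : 1 / (256 * (n i : ℝ)) ≤ b - a :=
    one_div_le_sub_of_meets_resonantInterval (hgood i).separated (hgood i).pos
      ((exp_neg_mul_le_of_mem_isolatedIndices hd (hmem hl).1).trans (hgood i).exp_le_one_div)
      hi₀i (hgood i₀).lt hl₀ (hmem hl).1 (hmem hl).2.1.ne hm₀ (hmem hl).2.2
  exact (hgood i).sum_meets_resonantInterval_le hd hab (Finset.filter_subset _ _)
    fun l hl ↦ (hmem hl).2.2

-- The interval of least index is kept apart; any other one met at scale `n i` forces
-- `1 / (256 * n i) ≤ b - a`, so that separation at that scale bounds the number of those met.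
lemma sum_min_meets_resonantInterval_le (hd : 0 < d) (hn : ∀ i j, i < j → 2 * n i ≤ n j)
    (hgood : ∀ i, IsGoodScale α d u v K (n i)) {u' v' a b : ℝ} {g : ℝ≥0∞}
    (hg : ENNReal.ofReal (48 * M * (b - a) / d) ≤ g) :
    ∑ l ∈ (Finset.range M).biUnion fun i ↦ isolatedIndices α d u' v' K (n i)
      with (Ioo a b ∩ resonantInterval α d l).Nonempty,
      min g (ENNReal.ofReal (1 / (8 * d * l))) ≤ 2 * g := by
  set F := ((Finset.range M).biUnion fun i ↦ isolatedIndices α d u' v' K (n i)).filter fun l ↦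
    (Ioo a b ∩ resonantInterval α d l).Nonempty
  rcases F.eq_empty_or_nonempty with hF0 | hF0
  · simp [hF0]
  obtain ⟨l₀, hl₀, hmin⟩ := F.exists_min_image id hF0
  obtain ⟨hl₀I, hm₀⟩ := Finset.mem_filter.1 hl₀
  obtain ⟨i₀, -, hi₀⟩ := Finset.mem_biUnion.1 hl₀I
  let G (i : ℕ) := (isolatedIndices α d u' v' K (n i)).filter fun l ↦
    l₀ < l ∧ (Ioo a b ∩ resonantInterval α d l).Nonempty
  have hFG : F.erase l₀ ⊆ (Finset.range M).biUnion G := fun l hl ↦ by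
    obtain ⟨hne, hlF⟩ := Finset.mem_erase.1 hl
    obtain ⟨hlI, hm⟩ := Finset.mem_filter.1 hlF
    obtain ⟨i, hi, hli⟩ := Finset.mem_biUnion.1 hlI
    exact Finset.mem_biUnion.2
      ⟨i, hi, Finset.mem_filter.2 ⟨hli, (hmin l hlF).lt_of_ne hne.symm, hm⟩⟩
  rw [← Finset.add_sum_erase _ _ hl₀, two_mul]
  refine add_le_add (min_le_left _ _) (le_trans ?_ hg)
  calc ∑ l ∈ F.erase l₀, min g (ENNReal.ofReal (1 / (8 * d * l)))
    _ ≤ ∑ l ∈ (Finset.range M).biUnion G, ENNReal.ofReal (1 / (8 * d * l)) :=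
      (Finset.sum_le_sum fun l _ ↦ min_le_right _ _).trans (Finset.sum_le_sum_of_subset hFG)
    _ = ∑ i ∈ Finset.range M, ∑ l ∈ G i, ENNReal.ofReal (1 / (8 * d * l)) :=
      Finset.sum_biUnion ((pairwiseDisjoint_isolatedIndices hn _).mono fun i ↦
        Finset.filter_subset _ _)
    _ ≤ ∑ i ∈ Finset.range M, ENNReal.ofReal (48 * (b - a) / d) :=
      Finset.sum_le_sum fun i _ ↦ sum_gt_meets_resonantInterval_le hd hn hgood hi₀ hm₀ i
    _ = ENNReal.ofReal (48 * M * (b - a) / d) := by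
      rw [Finset.sum_const, Finset.card_range, nsmul_eq_mul, ← ENNReal.ofReal_natCast,
        ← ENNReal.ofReal_mul (by positivity)]
      ring_nf

lemma exists_coverMass_resonantInterval_lt {ι : Type*} (hd : 0 < d) (huv : u < v)
    (hn : ∀ i j, i < j → 2 * n i ≤ n j) (hgood : ∀ i, IsGoodScale α d u v K (n i))
    {a b : ι → ℝ} {g : ι → ℝ≥0∞}
    (hg : ∀ j, (Ioo (a j) (b j) ∩ Icc u v).Nonempty →
      ENNReal.ofReal (48 * M * (b j - a j) / d) ≤ g j)
    (hmass : 2 * coverMass (fun j ↦ Ioo (a j) (b j)) g (Icc u v) <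
      ENNReal.ofReal (M * (v - u) / (256 * d))) :
    ∃ i, ∃ l ∈ isolatedIndices α d u ((u + v) / 2) K (n i),
      coverMass (fun j ↦ Ioo (a j) (b j)) g (resonantInterval α d l) <
        ENNReal.ofReal (1 / (8 * d * l)) := by
  set P := (Finset.range M).biUnion fun i ↦ isolatedIndices α d u ((u + v) / 2) K (n i)
  have hsum : ENNReal.ofReal (M * (v - u) / (256 * d)) ≤
      ∑ l ∈ P, ENNReal.ofReal (1 / (8 * d * l)) := by
    calc ENNReal.ofReal (M * (v - u) / (256 * d))
      _ = ∑ i ∈ Finset.range M, ENNReal.ofReal ((v - u) / (256 * d)) := by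
        rw [Finset.sum_const, Finset.card_range, nsmul_eq_mul, mul_div_assoc,
          ENNReal.ofReal_mul (by positivity), ENNReal.ofReal_natCast]
      _ ≤ _ := by
        rw [Finset.sum_biUnion (pairwiseDisjoint_isolatedIndices hn _)]
        exact Finset.sum_le_sum fun i _ ↦ (hgood i).ofReal_le_sum_isolatedIndices hd huv
  have hsub : ∀ l ∈ P, resonantInterval α d l ⊆ Icc u v := fun l hl ↦ by
    obtain ⟨i, -, hi⟩ := Finset.mem_biUnion.1 hl
    exact (hgood i).resonantInterval_subset hd hi
  obtain ⟨l, hl, hlt⟩ := exists_coverMass_lt hsub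
    (fun j hj ↦ sum_min_meets_resonantInterval_le hd hn hgood (hg j hj)) (hmass.trans_le hsum)
  obtain ⟨i, -, hi⟩ := Finset.mem_biUnion.1 hl
  exact ⟨i, l, hi, hlt⟩

end ScaleSequence

/-! ### Resonance on a range of indices -/

/-- `x` resonates with the orbit of `α` at rate `d` on the indices in `(K, K']`: the bound
`exp (-d * k)` is attained by the distance from `x` to some `k * α`, with `k > K`, and is respected
by all `k` in the range up to a factor `2`. No index up to `K'` is resonant with infinite strength,
so that `x` stays off the orbit when the ranges exhaust all indices. -/
structure ResonatesAt (α d : ℝ) (K K' : ℕ) (x : ℝ) : Prop where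
  exists_distZ_le : ∃ l : ℕ, K < l ∧ distZ (x - l * α) ≤ Real.exp (-(d * l))
  distZ_pos : ∀ k : ℤ, k.natAbs ≤ K' → 0 < distZ (x - k * α)
  half_exp_le_distZ : ∀ k : ℤ, K < k.natAbs → k.natAbs ≤ K' →
    Real.exp (-(d * k.natAbs)) / 2 ≤ distZ (x - k * α)

section GoodScale

variable {α d u v x : ℝ} {K n l : ℕ}

lemma distZ_mul_sub_mul_le_of_mem_resonantInterval (hx : x ∈ resonantInterval α d l) (y : ℝ) :
    distZ (l * α - y) ≤ distZ (x - y) + Real.exp (-(d * l)) := by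
  have hpos := Real.exp_pos (-(d * l))
  calc distZ (l * α - y)
    _ = distZ (Int.fract (l * α) - y) := (distZ_fract_sub _ _).symm
    _ ≤ distZ (x - y) + |(Int.fract (l * α) - y) - (x - y)| := distZ_le_add_abs_sub _ _
    _ ≤ distZ (x - y) + Real.exp (-(d * l)) := by
      gcongr
      rw [sub_sub_sub_cancel_right, abs_le]
      exact ⟨by linarith [hx.2], by linarith [hx.1]⟩

lemma IsGoodScale.exp_le_half (h : IsGoodScale α d u v K n) (hd : 0 < d)
    (hl : l ∈ isolatedIndices α d u ((u + v) / 2) K n) : Real.exp (-(d * l)) ≤ 1 / 2 := by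
  linarith [exp_neg_mul_le_of_mem_isolatedIndices hd hl, h.exp_le_one_sub_exp, Real.exp_pos (-d)]

lemma IsGoodScale.resonatesAt (h : IsGoodScale α d u v K n) (hd : 0 < d)
    (hl : l ∈ isolatedIndices α d u ((u + v) / 2) K n) (hx : x ∈ resonantInterval α d l) :
    ResonatesAt α d K (4 * n) x := by
  obtain ⟨⟨hnl, hln⟩, -, hiso⟩ := mem_isolatedIndices.1 hl
  have hdist := distZ_sub_mul_mem_Icc_of_mem_resonantInterval (h.exp_le_half hd hl) hx
  have hne : ∀ k : ℤ, k ≠ l → k.natAbs ≤ 4 * n →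
      7 * Real.exp (-(d * l)) ≤ distZ (x - k * α) ∧
        distZ (l * α - k * α) ≤ distZ (x - k * α) + Real.exp (-(d * l)) := fun k hkl hk ↦ by
    have hsep := h.separated.le_distZ_sub (j := l) (k := k) hkl.symm (by omega)
    rw [Int.cast_natCast] at hsep
    have hclose := distZ_mul_sub_mul_le_of_mem_resonantInterval hx (k * α)
    have hexp := (exp_neg_mul_le_of_mem_isolatedIndices hd hl).trans h.exp_le_one_div
    have hconst : 1 / (64 * (n : ℝ)) = 8 * (1 / (512 * n)) := by ring
    exact ⟨by linarith, hclose⟩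
  have hpos := Real.exp_pos (-(d * l))
  refine ⟨⟨l, h.lt.trans_le hnl, hdist.2⟩, fun k hk ↦ ?_, fun k hKk hk ↦ ?_⟩
  · rcases eq_or_ne k l with rfl | hkl
    · exact (half_pos hpos).trans_le hdist.1
    · linarith [(hne k hkl hk).1]
  · rcases eq_or_ne k l with rfl | hkl
    · exact hdist.1
    · linarith [hne k hkl hk, hiso k hKk hk hkl, Real.exp_pos (-(d * k.natAbs))]

lemma IsGoodScale.exp_four_mul_div_le (h : IsGoodScale α d u v K n) (hd : 0 < d)
    (hl : l ∈ isolatedIndices α d u ((u + v) / 2) K n) :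
    Real.exp (-(d * (4 * n : ℕ))) / (1 - Real.exp (-d)) ≤ Real.exp (-(d * l)) / 2 / 12288 := by
  have hln : (l : ℝ) ≤ 2 * n := by exact_mod_cast (mem_isolatedIndices.1 hl).1.2.le
  have hd' : 0 < 1 - Real.exp (-d) := sub_pos.2 (Real.exp_lt_one_iff.2 (neg_lt_zero.2 hd))
  rw [div_le_iff₀ hd']
  calc Real.exp (-(d * (4 * n : ℕ)))
    _ ≤ Real.exp (-(d * n)) * Real.exp (-(d * l)) := by
      rw [← Real.exp_add, Real.exp_le_exp]
      push_cast
      nlinarith [mul_le_mul_of_nonneg_left hln hd.le, mul_nonneg hd.le n.cast_nonneg]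
    _ ≤ (1 - Real.exp (-d)) / 49152 * Real.exp (-(d * l)) := by
      gcongr
      exact h.exp_le_one_sub_exp
    _ ≤ Real.exp (-(d * l)) / 2 / 12288 * (1 - Real.exp (-d)) := by
      linarith [mul_nonneg hd'.le (Real.exp_pos (-(d * l))).le]

lemma exists_seq_isGoodScale (hα : Irrational α) (hd : 0 < d) (hu : 0 ≤ u) (huv : u < v)
    (hv : v ≤ 1) (hK : Real.exp (-(d * K)) / (1 - Real.exp (-d)) ≤ (v - u) / 12288) :
    ∃ n : ℕ → ℕ, (∀ i, IsGoodScale α d u v K (n i)) ∧ ∀ i j, i < j → 2 * n i ≤ n j := by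
  refine exists_seq_of_forall_finset_exists _ (fun m n ↦ 2 * m ≤ n) fun s _ ↦ ?_
  obtain ⟨n, hn, hle⟩ := ((frequently_isGoodScale hα hd hu huv hv hK).and_eventually
    (eventually_ge_atTop (s.sup (2 * ·)))).exists
  exact ⟨n, hn, fun m hm ↦ (Finset.le_sup (f := (2 * ·)) hm).trans hle⟩

end GoodScale

/-! ### The gauge functions -/

lemma omegaS_of_pos (s : ℝ) {r : ℝ} (hr : 0 < r) : omegaS s r = (-Real.log r) ^ (-s) := if_pos hr

lemma omegaS_of_nonpos (s : ℝ) {r : ℝ} (hr : r ≤ 0) : omegaS s r = 0 := if_neg hr.not_gt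

lemma omegaS_one_of_pos {r : ℝ} (hr : 0 < r) : omegaS 1 r = (-Real.log r)⁻¹ := by
  rw [omegaS_of_pos 1 hr, Real.rpow_neg_one]

lemma omegaS_one_le_of_le_exp {s r : ℝ} (hs : s ≤ 1) (hr : r ≤ Real.exp (-1)) :
    omegaS 1 r ≤ omegaS s r := by
  rcases le_or_gt r 0 with h0 | h0
  · rw [omegaS_of_nonpos _ h0, omegaS_of_nonpos _ h0]
  · rw [omegaS_of_pos _ h0, omegaS_of_pos _ h0]
    have : Real.log r ≤ -1 := (Real.log_le_iff_le_exp h0).2 hr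
    exact Real.rpow_le_rpow_of_exponent_le (by linarith) (by linarith)

lemma mul_neg_log_le_two_mul_sqrt {r : ℝ} (hr : 0 ≤ r) : r * -Real.log r ≤ 2 * √r := by
  rcases hr.eq_or_lt with rfl | hr
  · simp
  have hlog := Real.log_le_sub_one_of_pos (inv_pos.2 (Real.sqrt_pos.2 hr))
  rw [Real.log_inv, Real.log_sqrt hr.le] at hlog
  calc r * -Real.log r ≤ r * (2 * (√r)⁻¹) := by gcongr; linarith
    _ = 2 * √r := by rw [mul_left_comm, ← div_eq_mul_inv, Real.div_sqrt]

lemma mul_le_omegaS_one {c r : ℝ} (hc : 0 ≤ c) (hr0 : 0 < r) (hr1 : r < 1)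
    (h : c * (2 * √r) ≤ 1) : c * r ≤ omegaS 1 r := by
  rw [omegaS_one_of_pos hr0, ← one_div, le_div_iff₀ (neg_pos.2 (Real.log_neg hr0 hr1)), mul_assoc]
  exact (mul_le_mul_of_nonneg_left (mul_neg_log_le_two_mul_sqrt hr0.le) hc).trans h

lemma le_pow_of_mul_omegaS_one_le {n : ℕ} {r L : ℝ} (hr0 : 0 < r) (hr1 : r < 1) (hL0 : 0 < L)
    (hL1 : L < 1) (h : n * omegaS 1 r ≤ omegaS 1 L) : r ≤ L ^ n := by
  rw [omegaS_one_of_pos hr0, omegaS_one_of_pos hL0, ← div_eq_mul_inv,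
    div_le_iff₀ (neg_pos.2 (Real.log_neg hr0 hr1)), ← div_eq_inv_mul,
    le_div_iff₀ (neg_pos.2 (Real.log_neg hL0 hL1))] at h
  rw [← Real.log_le_log_iff hr0 (by positivity), Real.log_pow]
  linarith

lemma omegaS_one_lt_one {r : ℝ} (hr0 : 0 < r) (hr : r < Real.exp (-1)) : omegaS 1 r < 1 := by
  have : Real.log r < -1 := (Real.log_lt_iff_lt_exp hr0).2 hr
  rw [omegaS_one_of_pos hr0]
  exact inv_lt_one_of_one_lt₀ (by linarith)

lemma one_div_two_mul_le_omegaS_one {t : ℝ} (ht : Real.exp (-t) ≤ 1 / 2) :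
    1 / (2 * t) ≤ omegaS 1 (Real.exp (-t) / 2) := by
  have hlog : Real.log 2 ≤ t := by
    rw [← neg_le_neg_iff, ← Real.log_inv, Real.le_log_iff_exp_le (by norm_num)]
    linarith
  have hpos := Real.log_pos one_lt_two
  rw [omegaS_one_of_pos (by positivity), one_div, Real.log_div (Real.exp_ne_zero _) two_ne_zero,
    Real.log_exp]
  exact inv_anti₀ (by linarith) (by linarith)

/-! ### Light stages -/

/-- A stage of the construction of resonant points: the current interval `[left, right]` and the
largest index whose resonances have been decided. -/
structure Stage where
  left : ℝ
  right : ℝ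
  index : ℕ

namespace Stage

/-- The points that are still available at the stage `T`. -/
def interval (T : Stage) : Set ℝ := Icc T.left T.right

/-- The length of the interval of the stage `T`. -/
def length (T : Stage) : ℝ := T.right - T.left

/-- The stage `T` can be refined at the rate `d`: it is a nondegenerate subinterval of `[0, 1]`, and
the resonances at the rate `d` beyond its index fill only a small part of it. -/
structure IsRefinable (T : Stage) (d : ℝ) : Prop where
  left_nonneg : 0 ≤ T.left
  right_le_one : T.right ≤ 1
  length_pos : 0 < T.length
  exp_div_le : Real.exp (-(d * T.index)) / (1 - Real.exp (-d)) ≤ T.length / 12288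

/-- The stage `T` is refinable and short, and the cover by the intervals `(a j, b j)` is light on
it: the intervals that meet `T` have total `ω₁`-mass at most a quarter of `ω₁ T.length`. -/
structure IsLight (T : Stage) {ι : Type*} (a b : ι → ℝ) (d : ℝ) : Prop extends T.IsRefinable d where
  length_le : T.length ≤ (1 - Real.exp (-d)) / 49152
  four_mul_coverMass_le :
    4 * coverMass (fun j ↦ Ioo (a j) (b j)) (fun j ↦ ENNReal.ofReal (omegaS 1 (b j - a j)))
      T.interval ≤ ENNReal.ofReal (omegaS 1 T.length)

/-- `T'` refines `T` at the rate `d`: it is a subinterval of at most half the length, whose points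
resonate at the rate `d` on the indices decided between the two stages. -/
structure Refines (T' T : Stage) (α d : ℝ) : Prop where
  interval_subset : T'.interval ⊆ T.interval
  length_le_half : T'.length ≤ T.length / 2
  index_lt : T.index < T'.index
  resonatesAt : ∀ x ∈ T'.interval, ResonatesAt α d T.index T'.index x

variable {T T' : Stage} {α d d' : ℝ} {ι : Type*} {a b : ι → ℝ}

lemma IsRefinable.mono (h : T.IsRefinable d) (hd : 0 < d) (hdd' : d ≤ d') : T.IsRefinable d' where
  left_nonneg := h.left_nonneg
  right_le_one := h.right_le_one
  length_pos := h.length_pos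
  exp_div_le := by
    have hd' : 0 < 1 - Real.exp (-d) := sub_pos.2 (Real.exp_lt_one_iff.2 (neg_lt_zero.2 hd))
    exact le_trans (by gcongr) h.exp_div_le

lemma IsLight.mono (h : T.IsLight a b d) (hd : 0 < d) (hdd' : d ≤ d') : T.IsLight a b d' where
  toIsRefinable := h.toIsRefinable.mono hd hdd'
  length_le := h.length_le.trans (by gcongr)
  four_mul_coverMass_le := h.four_mul_coverMass_le

lemma IsLight.length_lt (h : T.IsLight a b d) : T.length < 1 / 49152 := by
  linarith [h.length_le, Real.exp_pos (-d)]

lemma IsLight.sub_le_length_pow (h : T.IsLight a b d) {j : ι}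
    (hj : (Ioo (a j) (b j) ∩ T.interval).Nonempty) (hj1 : b j - a j < 1) :
    b j - a j ≤ T.length ^ 4 := by
  have hj0 : 0 < b j - a j := sub_pos.2 (nonempty_Ioo.1 hj.left)
  have hT0 := h.length_pos
  have hT1 : T.length < 1 := h.length_lt.trans (by norm_num)
  refine le_pow_of_mul_omegaS_one_le hj0 hj1 hT0 hT1 ?_
  have hT : 0 ≤ omegaS 1 T.length := by
    rw [omegaS_one_of_pos hT0, inv_nonneg]
    exact neg_nonneg.2 (Real.log_nonpos hT0.le hT1.le)
  rw [← ENNReal.ofReal_le_ofReal_iff hT, ENNReal.ofReal_mul (by positivity),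
    ENNReal.ofReal_natCast, Nat.cast_ofNat]
  refine le_trans ?_ h.four_mul_coverMass_le
  gcongr
  exact le_coverMass (U := fun j ↦ Ioo (a j) (b j)) (g := fun j ↦ ENNReal.ofReal (omegaS 1 _)) hj

lemma IsRefinable.exists_refines (hα : Irrational α) (hd : 0 < d) (hT : T.IsRefinable d) {M : ℕ}
    (hab : ∀ j, (Ioo (a j) (b j) ∩ T.interval).Nonempty →
      48 * M / d * (b j - a j) ≤ omegaS 1 (b j - a j))
    (hmass : 2 * coverMass (fun j ↦ Ioo (a j) (b j))
      (fun j ↦ ENNReal.ofReal (omegaS 1 (b j - a j))) T.interval <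
        ENNReal.ofReal (M * T.length / (256 * d))) :
    ∃ T' : Stage, T'.Refines T α d ∧ T'.IsLight a b d := by
  have huv : T.left < T.right := sub_pos.1 hT.length_pos
  obtain ⟨n, hgood, hn⟩ :=
    exists_seq_isGoodScale hα hd hT.left_nonneg huv hT.right_le_one hT.exp_div_le
  obtain ⟨i, l, hl, hlight⟩ := exists_coverMass_resonantInterval_lt hd huv hn hgood
    (fun j hj ↦ ENNReal.ofReal_le_ofReal ((mul_div_right_comm _ _ _).trans_le (hab j hj))) hmass
  have hi := hgood i
  have hpos := Real.exp_pos (-(d * l))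
  have hle := exp_neg_mul_le_of_mem_isolatedIndices hd hl
  let T' : Stage := ⟨Int.fract (l * α) + Real.exp (-(d * l)) / 2,
    Int.fract (l * α) + Real.exp (-(d * l)), 4 * n i⟩
  have hlen : T'.length = Real.exp (-(d * l)) / 2 := by simp only [length, T']; ring
  have hsub : T'.interval ⊆ T.interval := hi.resonantInterval_subset hd hl
  have hlen0 : 0 < T'.length := hlen ▸ half_pos hpos
  have hsub' := (Icc_subset_Icc_iff (sub_pos.1 hlen0).le).1 hsub
  refine ⟨T', ⟨hsub, ?_, ?_, fun x ↦ hi.resonatesAt hd hl⟩, ⟨?_, ?_, hlen0, ?_⟩, ?_, ?_⟩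
  · have hhalf : Real.exp (-(d * n i)) ≤ T.length / 2 := hi.exp_le_half_sub
    linarith
  · exact hi.lt.trans_le (Nat.le_mul_of_pos_left _ four_pos)
  · exact hT.left_nonneg.trans hsub'.1
  · exact hsub'.2.trans hT.right_le_one
  · rw [hlen]
    exact hi.exp_four_mul_div_le hd hl
  · linarith [hi.exp_le_one_sub_exp]
  · calc 4 * coverMass _ _ (resonantInterval α d l)
      _ ≤ 4 * ENNReal.ofReal (1 / (8 * d * l)) := by gcongr
      _ = ENNReal.ofReal (1 / (2 * (d * l))) := by
        rw [← ENNReal.ofReal_ofNat 4, ← ENNReal.ofReal_mul (by positivity)]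
        ring_nf
      _ ≤ ENNReal.ofReal (omegaS 1 T'.length) := by
        rw [hlen]
        exact ENNReal.ofReal_le_ofReal (one_div_two_mul_le_omegaS_one (hi.exp_le_half hd hl))

lemma IsLight.exists_refines (hα : Irrational α) (hd : 0 < d) (hT : T.IsLight a b d)
    (hab : ∀ j, b j - a j < 1) : ∃ T' : Stage, T'.Refines T α d ∧ T'.IsLight a b d := by
  have hL := hT.length_pos
  have hLd : T.length ≤ d := by linarith [hT.length_le, Real.add_one_le_exp (-d)]
  have hM := Nat.ceil_lt_add_one (a := 256 * d / T.length) (by positivity)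
  have hM' := Nat.le_ceil (256 * d / T.length)
  set M := ⌈256 * d / T.length⌉₊
  have hM512 : (M : ℝ) ≤ 512 * d / T.length := by
    have : 1 ≤ 256 * d / T.length := by rw [one_le_div hL]; linarith
    linarith [show 512 * d / T.length = 256 * d / T.length + 256 * d / T.length by ring]
  refine hT.toIsRefinable.exists_refines hα hd (M := M) (fun j hj ↦ ?_) ?_
  · have hj0 : 0 < b j - a j := sub_pos.2 (nonempty_Ioo.1 hj.left)
    have hsqrt : √(b j - a j) ≤ T.length ^ 2 := by
      rw [Real.sqrt_le_left (by positivity), ← pow_mul]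
      exact hT.sub_le_length_pow hj (hab j)
    refine mul_le_omegaS_one (by positivity) hj0 (hab j) ?_
    calc 48 * M / d * (2 * √(b j - a j))
      _ ≤ 48 * (512 * d / T.length) / d * (2 * T.length ^ 2) := by gcongr
      _ = 49152 * T.length := by field_simp; norm_num
      _ ≤ 1 := by linarith [hT.length_lt]
  · calc 2 * coverMass _ _ T.interval
      _ ≤ 4 * coverMass _ _ T.interval := by gcongr; norm_num
      _ ≤ ENNReal.ofReal (omegaS 1 T.length) := hT.four_mul_coverMass_le
      _ < ENNReal.ofReal 1 := by
        refine (ENNReal.ofReal_lt_ofReal_iff one_pos).2 (omegaS_one_lt_one hL ?_)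
        linarith [hT.length_lt, Real.exp_neg_one_gt_d9]
      _ ≤ ENNReal.ofReal (M * T.length / (256 * d)) := by
        refine ENNReal.ofReal_le_ofReal ((one_le_div (by positivity)).2 ?_)
        rwa [div_le_iff₀ hL] at hM'

lemma exists_isLight (hα : Irrational α) (hd : 0 < d) (C : ℝ≥0) :
    ∃ ε ∈ Ioo (0 : ℝ) 1, ∀ a b : ι → ℝ, (∀ j, b j - a j ≤ ε) →
      ∑' j, ENNReal.ofReal (omegaS 1 (b j - a j)) ≤ C → ∃ T : Stage, T.IsLight a b d := by
  obtain ⟨M, hM⟩ := exists_nat_gt (2 * C * (256 * d))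
  set c : ℝ := 48 * M / d
  have hc : 0 ≤ c := by positivity
  have hexp : Tendsto (fun n : ℕ ↦ Real.exp (-(d * n))) atTop (𝓝 0) :=
    Real.tendsto_exp_neg_atTop_nhds_zero.comp (tendsto_natCast_atTop_atTop.const_mul_atTop hd)
  have hd' : 0 < 1 - Real.exp (-d) := sub_pos.2 (Real.exp_lt_one_iff.2 (neg_lt_zero.2 hd))
  obtain ⟨K, hK⟩ := (hexp.eventually_le_const
    (show 0 < 1 / 12288 * (1 - Real.exp (-d)) by positivity)).exists
  have hroot : IsRefinable ⟨0, 1, K⟩ d :=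
    ⟨le_rfl, le_rfl, by simp [length], by simpa [length, div_le_iff₀ hd'] using hK⟩
  obtain ⟨η, hη0, hη1, hcη⟩ : ∃ η : ℝ, 0 < η ∧ η < 1 ∧ c * (2 * η) ≤ 1 := by
    refine ⟨(2 * (c + 1))⁻¹, by positivity, inv_lt_one_of_one_lt₀ (by linarith), ?_⟩
    rw [mul_inv, mul_inv_cancel_left₀ two_ne_zero, mul_inv_le_iff₀ (by positivity)]
    linarith
  have hη2 : η ^ 2 < 1 := pow_lt_one₀ hη0.le hη1 two_ne_zero
  refine ⟨η ^ 2, ⟨by positivity, hη2⟩, fun a b hab hsum ↦ ?_⟩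
  refine (hroot.exists_refines hα hd (M := M) (a := a) (b := b) (fun j hj ↦ ?_) ?_).imp
    fun _ ↦ And.right
  · have hsqrt : √(b j - a j) ≤ η := (Real.sqrt_le_left hη0.le).2 (hab j)
    exact mul_le_omegaS_one hc (sub_pos.2 (nonempty_Ioo.1 hj.left)) ((hab j).trans_lt hη2)
      (le_trans (by gcongr) hcη)
  · calc 2 * coverMass _ _ _ ≤ 2 * (C : ℝ≥0∞) := by gcongr; exact coverMass_le_tsum.trans hsum
      _ = ENNReal.ofReal (2 * C) := by
        rw [ENNReal.ofReal_mul two_pos.le, ENNReal.ofReal_ofNat, ENNReal.ofReal_coe_nnreal]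
      _ < ENNReal.ofReal (M * length ⟨0, 1, K⟩ / (256 * d)) := by
        rw [ENNReal.ofReal_lt_ofReal_iff_of_nonneg (by positivity), lt_div_iff₀ (by positivity)]
        simpa [length] using hM

-- On a stage shorter than `b j - a j`, lightness would give `b j - a j ≤ T.length ^ 4 ≤ T.length`.
lemma notMem_Ioo_of_forall_isLight {x : ℝ} {T : ℕ → Stage} {d : ℕ → ℝ}
    (hlight : ∀ n, (T n).IsLight a b (d n)) (hx : ∀ n, x ∈ (T n).interval)
    (hlen : Tendsto (fun n ↦ (T n).length) atTop (𝓝 0)) (hab : ∀ j, b j - a j < 1) (j : ι) :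
    x ∉ Ioo (a j) (b j) := by
  intro hj
  obtain ⟨n, hn⟩ := (hlen.eventually_lt_const (sub_pos.2 (hj.1.trans hj.2))).exists
  refine hn.not_ge (((hlight n).sub_le_length_pow ⟨x, hj, hx n⟩ (hab j)).trans ?_)
  exact pow_le_of_le_one (hlight n).length_pos.le
    ((hlight n).length_lt.le.trans (by norm_num)) four_ne_zero

lemma tendsto_length_of_refines {T : ℕ → Stage} {d : ℕ → ℝ} (h0 : ∀ n, 0 ≤ (T n).length)
    (h : ∀ n, (T (n + 1)).Refines (T n) α (d n)) :
    Tendsto (fun n ↦ (T n).length) atTop (𝓝 0) := by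
  have hle : ∀ n, (T n).length ≤ (1 / 2) ^ n * (T 0).length := fun n ↦ by
    induction n with
    | zero => simp
    | succ n ih => rw [pow_succ]; linarith [(h n).length_le_half]
  refine squeeze_zero h0 hle ?_
  simpa using (tendsto_pow_atTop_nhds_zero_of_lt_one (r := (1 / 2 : ℝ)) (by norm_num)
    (by norm_num)).mul_const (T 0).length

end Stage

lemma exists_seq_of_forall_exists {X : Type*} {P : ℕ → X → Prop} {R : ℕ → X → X → Prop}
    (h0 : ∃ x, P 0 x) (h : ∀ n x, P n x → ∃ y, R n x y ∧ P (n + 1) y) :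
    ∃ x : ℕ → X, (∀ n, P n (x n)) ∧ ∀ n, R n (x n) (x (n + 1)) := by
  obtain ⟨x₀, hx₀⟩ := h0
  choose! f hR hP using h
  have hx : ∀ n, P n (Nat.rec x₀ f n) := fun n ↦ by
    induction n with
    | zero => exact hx₀
    | succ n ih => exact hP n _ ih
  exact ⟨fun n ↦ Nat.rec x₀ f n, hx, fun n ↦ hR n _ (hx n)⟩

lemma exists_resonatesAt_notMem_Ioo {ι : Type*} {α : ℝ} (hα : Irrational α) {d : ℕ → ℝ}
    (hd : Monotone d) (hd0 : 0 < d 0) (C : ℝ≥0) :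
    ∃ ε ∈ Ioo (0 : ℝ) 1, ∀ a b : ι → ℝ, (∀ j, b j - a j ≤ ε) →
      ∑' j, ENNReal.ofReal (omegaS 1 (b j - a j)) ≤ C →
      ∃ x ∈ Icc (0 : ℝ) 1, (∀ j, x ∉ Ioo (a j) (b j)) ∧
        ∃ K : ℕ → ℕ, StrictMono K ∧ ∀ n, ResonatesAt α (d n) (K n) (K (n + 1)) x := by
  have hdpos : ∀ n, 0 < d n := fun n ↦ hd0.trans_le (hd n.zero_le)
  obtain ⟨ε, hε, hroot⟩ := Stage.exists_isLight (ι := ι) hα hd0 C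
  refine ⟨ε, hε, fun a b hab hsum ↦ ?_⟩
  have hab1 : ∀ j, b j - a j < 1 := fun j ↦ (hab j).trans_lt hε.2
  have hstep : ∀ n (T : Stage), T.IsLight a b (d n) →
      ∃ T' : Stage, T'.Refines T α (d n) ∧ T'.IsLight a b (d (n + 1)) := fun n T hT ↦
    (hT.exists_refines hα (hdpos n) hab1).imp fun _ ↦
      And.imp_right fun h ↦ h.mono (hdpos n) (hd n.le_succ)
  obtain ⟨T, hlight, hrefines⟩ := exists_seq_of_forall_exists (hroot a b hab hsum) hstep
  have hlen : ∀ n, 0 ≤ (T n).length := fun n ↦ (hlight n).length_pos.le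
  obtain ⟨x, hx⟩ := IsCompact.nonempty_iInter_of_sequence_nonempty_isCompact_isClosed
    (fun n ↦ (T n).interval) (fun n ↦ (hrefines n).interval_subset)
    (fun n ↦ nonempty_Icc.2 (sub_nonneg.1 (hlen n))) isCompact_Icc (fun _ ↦ isClosed_Icc)
  rw [mem_iInter] at hx
  refine ⟨x, ⟨(hlight 0).left_nonneg.trans (hx 0).1, (hx 0).2.trans (hlight 0).right_le_one⟩,
    Stage.notMem_Ioo_of_forall_isLight hlight hx (Stage.tendsto_length_of_refines hlen hrefines)
      hab1, fun n ↦ (T n).index, strictMono_nat_of_lt_succ fun n ↦ (hrefines n).index_lt,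
    fun n ↦ (hrefines n).resonatesAt x (hx (n + 1))⟩

/-! ### The resonance strength -/

lemma tendsto_abs_intCast_cofinite_atTop :
    Tendsto (fun k : ℤ ↦ |(k : ℝ)|) cofinite atTop := by
  have h := tendsto_norm_cocompact_atTop (E := ℤ)
  rw [cocompact_eq_cofinite] at h
  exact h.congr Int.norm_eq_abs

section ResStrength

variable {α x c : ℝ} {δ : ℝ≥0∞}

lemma exists_eq_mul_add_iff_distZ_eq_zero :
    (∃ k m : ℤ, x = k * α + m) ↔ ∃ k : ℤ, distZ (x - k * α) = 0 := by
  simp only [distZ_eq_zero_iff, sub_eq_iff_eq_add']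

lemma resStrength_of_forall_distZ_pos (h : ∀ k : ℤ, 0 < distZ (x - k * α)) :
    resStrength α x =
      limsup (fun k : ℤ ↦ ENNReal.ofReal (-Real.log (distZ (x - k * α)) / |(k : ℝ)|)) cofinite :=
  if_neg fun hx ↦ by
    obtain ⟨k, hk⟩ := exists_eq_mul_add_iff_distZ_eq_zero.1 hx
    exact (h k).ne' hk

lemma ofReal_le_resStrength (h : ∀ k : ℤ, 0 < distZ (x - k * α))
    (hc : ∃ᶠ l : ℕ in atTop, distZ (x - l * α) ≤ Real.exp (-(c * l))) :
    ENNReal.ofReal c ≤ resStrength α x := by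
  rw [resStrength_of_forall_distZ_pos h]
  refine le_limsup_of_frequently_le' ?_
  have hcast : Tendsto (Nat.cast : ℕ → ℤ) atTop cofinite :=
    Nat.cofinite_eq_atTop ▸ Nat.cast_injective.tendsto_cofinite
  refine hcast.frequently ((hc.and_eventually (eventually_gt_atTop 0)).mono fun l ⟨hl, hl0⟩ ↦ ?_)
  have hl0 : (0 : ℝ) < l := Nat.cast_pos.2 hl0
  rw [Int.cast_natCast, abs_of_pos hl0]
  refine ENNReal.ofReal_le_ofReal ((le_div_iff₀ hl0).2 ?_)
  have := (Real.log_le_iff_le_exp (Int.cast_natCast (R := ℝ) l ▸ h l)).2 hl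
  linarith

lemma resStrength_le (h : ∀ k : ℤ, 0 < distZ (x - k * α))
    (hδ : ∀ᶠ k : ℤ in cofinite, ∃ c : ℝ, ENNReal.ofReal c ≤ δ ∧
      Real.exp (-(c * |(k : ℝ)|)) / 2 ≤ distZ (x - k * α)) : resStrength α x ≤ δ := by
  have herr : Tendsto (fun k : ℤ ↦ δ + ENNReal.ofReal (Real.log 2 / |(k : ℝ)|)) cofinite (𝓝 δ) := by
    simpa using tendsto_const_nhds.add (ENNReal.tendsto_ofReal
      (tendsto_abs_intCast_cofinite_atTop.const_div_atTop (Real.log 2)))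
  rw [resStrength_of_forall_distZ_pos h, ← herr.limsup_eq]
  refine limsup_le_limsup ?_
  filter_upwards [hδ, tendsto_abs_intCast_cofinite_atTop.eventually_gt_atTop 0]
    with k ⟨c, hcδ, hc⟩ hk
  calc ENNReal.ofReal (-Real.log (distZ (x - k * α)) / |(k : ℝ)|)
    _ ≤ ENNReal.ofReal (c + Real.log 2 / |(k : ℝ)|) := by
      refine ENNReal.ofReal_le_ofReal ?_
      have hlog := Real.log_le_log (by positivity) hc
      rw [Real.log_div (Real.exp_ne_zero _) two_ne_zero, Real.log_exp] at hlog
      rw [div_le_iff₀ hk, add_mul, div_mul_cancel₀ _ hk.ne']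
      linarith
    _ ≤ ENNReal.ofReal c + ENNReal.ofReal (Real.log 2 / |(k : ℝ)|) := ENNReal.ofReal_add_le
    _ ≤ δ + ENNReal.ofReal (Real.log 2 / |(k : ℝ)|) := by gcongr

lemma resStrength_eq_of_resonatesAt {d : ℕ → ℝ} {K : ℕ → ℕ} (hd : Monotone d)
    (hdδ : IsLUB (range fun n ↦ ENNReal.ofReal (d n)) δ) (hK : StrictMono K)
    (h : ∀ n, ResonatesAt α (d n) (K n) (K (n + 1)) x) : resStrength α x = δ := by
  have hpos : ∀ k : ℤ, 0 < distZ (x - k * α) := fun k ↦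
    (h k.natAbs).distZ_pos k ((Nat.le_succ _).trans (hK.le_apply (x := k.natAbs + 1)))
  refine le_antisymm (resStrength_le hpos ?_) (hdδ.2 (forall_mem_range.2 fun n ↦
    ofReal_le_resStrength hpos (frequently_atTop.2 fun N ↦ ?_)))
  · filter_upwards [tendsto_abs_intCast_cofinite_atTop.eventually_gt_atTop (K 0 : ℝ)] with k hk
    have hk : k.natAbs ∈ Ioi (K 0) := by
      rw [← Int.cast_abs, Int.abs_eq_natAbs] at hk
      exact_mod_cast hk
    rw [← bot_eq_zero, ← iUnion_Ioc_map_succ_eq_Ioi (fun n ↦ hK.monotone bot_le)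
      hK.not_bddAbove_range_of_wellFoundedLT] at hk
    obtain ⟨n, hn⟩ := mem_iUnion.1 hk
    refine ⟨d n, hdδ.1 ⟨n, rfl⟩, ?_⟩
    simpa only [Nat.cast_natAbs, Int.cast_abs] using (h n).half_exp_le_distZ k hn.1 hn.2
  · obtain ⟨l, hl, hle⟩ := (h (max n N)).exists_distZ_le
    refine ⟨l, ((le_max_right n N).trans hK.le_apply).trans hl.le, hle.trans ?_⟩
    gcongr
    exact hd (le_max_left n N)

end ResStrength

lemma exists_monotone_isLUB_ofReal {δ : ℝ≥0∞} (hδ : 0 < δ) :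
    ∃ d : ℕ → ℝ, Monotone d ∧ 0 < d 0 ∧ IsLUB (range fun n ↦ ENNReal.ofReal (d n)) δ := by
  obtain ⟨u, hu, huδ, hlim⟩ := exists_seq_strictMono_tendsto' hδ
  have htop : ∀ n, u n ≠ ⊤ := fun n ↦ (huδ n).2.ne_top
  refine ⟨fun n ↦ (u n).toReal, fun m n h ↦ ENNReal.toReal_mono (htop n) (hu.monotone h),
    ENNReal.toReal_pos (huδ 0).1.ne' (htop 0), ?_⟩
  simpa only [ENNReal.ofReal_toReal (htop _)] using isLUB_of_tendsto_atTop hu.monotone hlim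

lemma gaugeHaus_resSet_eq_top {α s : ℝ} {δ : ℝ≥0∞} (hα : Irrational α) (hδ : 0 < δ)
    (hs : s ≤ 1) : gaugeHaus (omegaS s) (resSet α δ) = ⊤ := by
  obtain ⟨d, hd, hd0, hdδ⟩ := exists_monotone_isLUB_ofReal hδ
  refine ENNReal.eq_top_of_forall_nnreal_le fun C ↦ ?_
  obtain ⟨ε, ⟨hε, -⟩, hmiss⟩ := exists_resonatesAt_notMem_Ioo hα hd hd0 C
  refine le_iSup₂_of_le (min ε (Real.exp (-1))) (lt_min hε (Real.exp_pos _)) ?_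
  refine le_iInf₂ fun a b ↦ le_iInf₂ fun hcov hab ↦ ?_
  by_contra! hlt
  have hmass : ∑' j, ENNReal.ofReal (omegaS 1 (b j - a j)) ≤ C :=
    (ENNReal.tsum_le_tsum fun j ↦ ENNReal.ofReal_le_ofReal
      (omegaS_one_le_of_le_exp hs ((hab j).2.trans (min_le_right _ _)))).trans hlt.le
  obtain ⟨x, hx, hxab, K, hK, hres⟩ :=
    hmiss a b (fun j ↦ (hab j).2.trans (min_le_left _ _)) hmass
  obtain ⟨j, hj⟩ := mem_iUnion.1 (hcov ⟨hx, resStrength_eq_of_resonatesAt hd hdδ hK hres⟩)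
  exact hxab j hj

/-! ### Null sets for the gauge Hausdorff measure -/

section Null

variable {ω : ℝ → ℝ} {S : Set ℝ}

lemma gaugeHaus_eq_zero_of_forall_exists_cover (hω : ω 0 = 0)
    (h : ∀ ε > 0, ∀ η : ℝ≥0∞, η ≠ 0 → ∃ (ι : Type) (_ : Countable ι) (a b : ι → ℝ),
      S ⊆ ⋃ i, Ioo (a i) (b i) ∧ (∀ i, a i ≤ b i ∧ b i - a i ≤ ε) ∧
        ∑' i, ENNReal.ofReal (ω (b i - a i)) ≤ η) : gaugeHaus ω S = 0 := by
  refine nonpos_iff_eq_zero.1 (iSup₂_le fun ε hε ↦ le_of_forall_gt_imp_ge_of_dense fun η hη ↦ ?_)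
  obtain ⟨ι, _, a, b, hS, hab, hsum⟩ := h ε hε η hη.ne'
  obtain ⟨e, he⟩ := exists_injective_nat ι
  have hout : ∀ n ∉ range e, Function.extend e a 0 n = 0 ∧ Function.extend e b 0 n = 0 :=
    fun n hn ↦ ⟨Function.extend_apply' _ _ _ hn, Function.extend_apply' _ _ _ hn⟩
  refine iInf₂_le_of_le (Function.extend e a 0) (Function.extend e b 0)
    (iInf₂_le_of_le (fun x hx ↦ ?_) (fun n ↦ ?_) (le_of_eq_of_le ?_ hsum))
  · obtain ⟨i, hi⟩ := mem_iUnion.1 (hS hx)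
    exact mem_iUnion.2 ⟨e i, by rwa [he.extend_apply, he.extend_apply]⟩
  · by_cases hn : n ∈ range e
    · obtain ⟨i, rfl⟩ := hn
      simpa only [he.extend_apply] using hab i
    · simp [hout n hn, hε.le]
  · rw [← he.tsum_eq]
    · simp only [he.extend_apply]
    · refine Function.support_subset_iff'.2 fun n hn ↦ ?_
      rw [(hout n hn).1, (hout n hn).2, sub_zero, hω, ENNReal.ofReal_zero]

lemma exists_cover_of_gaugeHaus_eq_zero (h : gaugeHaus ω S = 0) {ε : ℝ} (hε : 0 < ε)
    {η : ℝ≥0∞} (hη : η ≠ 0) :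
    ∃ a b : ℕ → ℝ, S ⊆ ⋃ n, Ioo (a n) (b n) ∧ (∀ n, a n ≤ b n ∧ b n - a n ≤ ε) ∧
      ∑' n, ENNReal.ofReal (ω (b n - a n)) < η := by
  have hlt := ((le_iSup₂ ε hε).trans_eq h).trans_lt (pos_iff_ne_zero.2 hη)
  simpa only [iInf_lt_iff, exists_prop] using hlt

lemma gaugeHaus_eq_zero_of_subset {T : Set ℝ} (hST : S ⊆ T) (hT : gaugeHaus ω T = 0) :
    gaugeHaus ω S = 0 :=
  nonpos_iff_eq_zero.1 <| hT ▸ iSup₂_mono fun _ _ ↦ iInf₂_mono fun _ _ ↦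
    iInf_mono' fun h ↦ ⟨hST.trans h, le_rfl⟩

lemma gaugeHaus_iUnion_eq_zero {κ : Type} [Countable κ] (hω : ω 0 = 0) {S : κ → Set ℝ}
    (h : ∀ k, gaugeHaus ω (S k) = 0) : gaugeHaus ω (⋃ k, S k) = 0 := by
  refine gaugeHaus_eq_zero_of_forall_exists_cover hω fun ε hε η hη ↦ ?_
  obtain ⟨θ, hθ, hθη⟩ := ENNReal.exists_pos_sum_of_countable' hη κ
  choose a b hS hab hsum using fun k ↦ exists_cover_of_gaugeHaus_eq_zero (h k) hε (hθ k).ne'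
  refine ⟨κ × ℕ, inferInstance, fun i ↦ a i.1 i.2, fun i ↦ b i.1 i.2, ?_,
    fun i ↦ hab i.1 i.2, ?_⟩
  · rw [iUnion_prod']
    exact iUnion_mono hS
  · rw [ENNReal.tsum_prod (f := fun k n ↦ ENNReal.ofReal (ω (b k n - a k n)))]
    exact (ENNReal.tsum_le_tsum fun k ↦ (hsum k).le).trans hθη.le

lemma gaugeHaus_union_eq_zero {T : Set ℝ} (hω : ω 0 = 0) (hS : gaugeHaus ω S = 0)
    (hT : gaugeHaus ω T = 0) : gaugeHaus ω (S ∪ T) = 0 := by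
  rw [union_eq_iUnion]
  exact gaugeHaus_iUnion_eq_zero hω (Bool.forall_bool.2 ⟨hT, hS⟩)

lemma gaugeHaus_singleton_eq_zero (hω : ω 0 = 0) (hω0 : Tendsto ω (𝓝[>] 0) (𝓝 0)) (x : ℝ) :
    gaugeHaus ω {x} = 0 := by
  refine gaugeHaus_eq_zero_of_forall_exists_cover hω fun ε hε η hη ↦ ?_
  have hlim : Tendsto (fun r ↦ ENNReal.ofReal (ω r)) (𝓝[>] 0) (𝓝 0) := by
    simpa using ENNReal.tendsto_ofReal hω0
  obtain ⟨r, hrη, hr0, hrε⟩ := ((hlim.eventually_le_const (pos_iff_ne_zero.2 hη)).and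
    (Ioc_mem_nhdsGT hε)).exists
  refine ⟨Unit, inferInstance, fun _ ↦ x - r / 2, fun _ ↦ x + r / 2, ?_, fun _ ↦ ?_, ?_⟩
  · rw [iUnion_const, singleton_subset_iff]
    constructor <;> linarith
  · constructor <;> linarith
  · rw [tsum_fintype, Fintype.sum_unique, add_sub_sub_cancel, add_halves]
    exact hrη

lemma gaugeHaus_setOf_frequently_mem_ball_eq_zero {ι : Type} [Countable ι] (hω : ω 0 = 0)
    (p : ι → ℝ) {r : ι → ℝ} (hr : ∀ i, 0 ≤ r i) (hlim : Tendsto r cofinite (𝓝 0))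
    (hsum : ∑' i, ENNReal.ofReal (ω (r i)) ≠ ⊤) :
    gaugeHaus ω {x | ∃ᶠ i in cofinite, x ∈ Metric.ball (p i) (r i / 2)} = 0 := by
  refine gaugeHaus_eq_zero_of_forall_exists_cover hω fun ε hε η hη ↦ ?_
  have hfin := eventually_cofinite.1 (hlim.eventually_le_const hε)
  obtain ⟨F, hFη, hF⟩ := (((ENNReal.tendsto_tsum_compl_atTop_zero hsum).eventually_le_const
    (pos_iff_ne_zero.2 hη)).and (eventually_ge_atTop hfin.toFinset)).exists
  have hlen : ∀ i, p i + r i / 2 - (p i - r i / 2) = r i := fun i ↦ by ring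
  refine ⟨{i // i ∉ F}, inferInstance, fun i ↦ p i - r i / 2, fun i ↦ p i + r i / 2,
    fun x hx ↦ ?_, fun i ↦ ⟨?_, ?_⟩, by simpa only [hlen] using hFη⟩
  · obtain ⟨i, hi, hiF⟩ := (hx.and_eventually F.finite_toSet.compl_mem_cofinite).exists
    exact mem_iUnion.2 ⟨⟨i, hiF⟩, Real.ball_eq_Ioo _ _ ▸ hi⟩
  · linarith [hr i]
  · rw [hlen]
    by_contra hi
    exact i.2 (hF (hfin.mem_toFinset.2 hi))

end Null

/-! ### Vanishing above the critical exponent -/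

lemma omegaS_exp_neg (s t : ℝ) : omegaS s (Real.exp (-t)) = t ^ (-s) := by
  rw [omegaS_of_pos s (Real.exp_pos _), Real.log_exp, neg_neg]

lemma tendsto_omegaS_nhdsGT_zero {s : ℝ} (hs : 0 < s) :
    Tendsto (omegaS s) (𝓝[>] 0) (𝓝 0) := by
  refine ((tendsto_rpow_neg_atTop hs).comp
    (tendsto_neg_atBot_atTop.comp Real.tendsto_log_nhdsGT_zero)).congr' ?_
  filter_upwards [self_mem_nhdsWithin] with r hr
  exact (omegaS_of_pos s hr).symm

lemma tsum_omegaS_exp_neg_mul_abs_ne_top {s c : ℝ} (hs : 1 < s) (hc : 0 ≤ c) :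
    ∑' k : ℤ, ENNReal.ofReal (omegaS s (Real.exp (-(c * |(k : ℝ)|)))) ≠ ⊤ := by
  refine Summable.tsum_ofReal_ne_top ?_
  simp only [omegaS_exp_neg, Real.mul_rpow hc (abs_nonneg _)]
  exact (Real.summable_abs_int_rpow hs).mul_left _

lemma exists_abs_sub_eq_distZ {x : ℝ} (hx : x ∈ Icc 0 1) (y : ℝ) :
    ∃ i : Fin 3, |x - (y + (⌊-y⌋ + (i : ℕ)))| = distZ (x - y) := by
  have hle : ⌊-y⌋ ≤ round (x - y) := by
    rw [round_eq]
    exact Int.floor_le_floor (by linarith [hx.1])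
  have hlt : round (x - y) < ⌊-y⌋ + 3 := by
    rw [round_eq, Int.floor_lt]
    push_cast
    linarith [hx.2, Int.lt_floor_add_one (-y)]
  obtain ⟨i, hi⟩ := Int.le.dest hle
  refine ⟨⟨i, by omega⟩, ?_⟩
  rw [distZ, ← hi, Int.cast_add, Int.cast_natCast, sub_add_eq_sub_sub]

lemma frequently_distZ_lt_half_exp {α x c : ℝ} (hx : ¬ ∃ k m : ℤ, x = k * α + m)
    (hc : ENNReal.ofReal c < resStrength α x) :
    ∃ᶠ k : ℤ in cofinite, distZ (x - k * α) < Real.exp (-(c * |(k : ℝ)|)) / 2 := by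
  have hpos : ∀ k : ℤ, 0 < distZ (x - k * α) := fun k ↦ (distZ_nonneg _).lt_of_ne' fun h ↦
    hx (exists_eq_mul_add_iff_distZ_eq_zero.2 ⟨k, h⟩)
  refine fun h ↦ hc.not_ge (resStrength_le hpos (h.mono fun k hk ↦ ⟨c, le_rfl, not_lt.1 hk⟩))

lemma resSet_subset {α c : ℝ} {δ : ℝ≥0∞} (hc : ENNReal.ofReal c < δ) :
    resSet α δ ⊆ (⋃ km : ℤ × ℤ, {km.1 * α + km.2}) ∪ ⋃ i : Fin 3, {x | ∃ᶠ k : ℤ in cofinite,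
      x ∈ Metric.ball (k * α + (⌊-(k * α)⌋ + (i : ℕ))) (Real.exp (-(c * |(k : ℝ)|)) / 2)} := by
  rintro x ⟨hx, hxδ⟩
  by_cases horb : ∃ k m : ℤ, x = k * α + m
  · obtain ⟨k, m, rfl⟩ := horb
    exact Or.inl (mem_iUnion.2 ⟨(k, m), rfl⟩)
  · refine Or.inr (mem_iUnion.2 (frequently_exists.1 ?_))
    refine (frequently_distZ_lt_half_exp horb (hxδ ▸ hc)).mono fun k hk ↦ ?_
    obtain ⟨i, hi⟩ := exists_abs_sub_eq_distZ hx (k * α)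
    exact ⟨i, hi.trans_lt hk⟩

lemma gaugeHaus_resSet_eq_zero (α : ℝ) {s : ℝ} {δ : ℝ≥0∞} (hδ : 0 < δ) (hs : 1 < s) :
    gaugeHaus (omegaS s) (resSet α δ) = 0 := by
  obtain ⟨c, -, hc, hcδ⟩ := ENNReal.lt_iff_exists_real_btwn.1 hδ
  have hc : 0 < c := ENNReal.ofReal_pos.1 hc
  have hω : omegaS s 0 = 0 := omegaS_of_nonpos s le_rfl
  have horbit : ∀ km : ℤ × ℤ, gaugeHaus (omegaS s) {km.1 * α + km.2} = 0 := fun km ↦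
    gaugeHaus_singleton_eq_zero hω (tendsto_omegaS_nhdsGT_zero (one_pos.trans hs)) _
  have hlim : Tendsto (fun k : ℤ ↦ Real.exp (-(c * |(k : ℝ)|))) cofinite (𝓝 0) :=
    Real.tendsto_exp_neg_atTop_nhds_zero.comp
      (tendsto_abs_intCast_cofinite_atTop.const_mul_atTop hc)
  exact gaugeHaus_eq_zero_of_subset (resSet_subset hcδ) <|
    gaugeHaus_union_eq_zero hω (gaugeHaus_iUnion_eq_zero hω horbit) <|
    gaugeHaus_iUnion_eq_zero hω fun i ↦ gaugeHaus_setOf_frequently_mem_ball_eq_zero hω _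
      (fun k ↦ (Real.exp_pos _).le) hlim (tsum_omegaS_exp_neg_mul_abs_ne_top hs hc.le)

theorem hausdorff_omegaS_resSet_dichotomy_general (α : ℝ) {δ : ℝ≥0∞} (hδ : 0 < δ) :
    (∀ s : ℝ, 1 < s → gaugeHaus (omegaS s) (resSet α δ) = 0) ∧
    (Irrational α → ∀ s : ℝ, s ≤ 1 → gaugeHaus (omegaS s) (resSet α δ) = ⊤) :=
  ⟨fun _ hs ↦ gaugeHaus_resSet_eq_zero α hδ hs, fun hα _ hs ↦ gaugeHaus_resSet_eq_top hα hδ hs⟩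

/-- Zero–infinity dichotomy: for irrational `α ∈ [0,1]` and `0 < δ ≤ ∞`,
`ℋ^{ω_s}(D(δ)) = 0` for every `s > 1` and `ℋ^{ω_s}(D(δ)) = ∞` for every `0 < s ≤ 1`. -/
theorem hausdorff_omegaS_resSet_dichotomy (α : ℝ) (hα : Irrational α)
    (hα01 : α ∈ Set.Icc (0 : ℝ) 1) (δ : ℝ≥0∞) (hδ : 0 < δ) :
    (∀ s : ℝ, 1 < s → gaugeHaus (omegaS s) (resSet α δ) = 0) ∧
    (∀ s : ℝ, 0 < s → s ≤ 1 → gaugeHaus (omegaS s) (resSet α δ) = ⊤) :=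
  (hausdorff_omegaS_resSet_dichotomy_general α hδ).imp_right fun h s _ ↦ h hα s
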